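/- arXiv:math/0511011 — 2 statements merged into one kernel-verified Lean document; each statement's English description precedes it below -/
import Mathlib

section
/- Let W ⊆ (0,1)×(0,1) be a Borel set of class A_{δσ}. Then α(W) = β(W), where α(W) = sup{m(W) : m ∈ M}, M the set of positive Borel measures on the square with both marginals bounded by Lebesgue measure, and β(W) = inf{Leb(U)+Leb(V) : W ⊆ (U×(0,1)) ∪ ((0,1)×V)}. -/
open MeasureTheory Set
open scoped ENNReal

noncomputable section

/-- The set of positive Borel measures on the plane whose marginals are
bounded by Lebesgue measure restricted to `(0,1)`. -/
def Mset : Set (Measure (ℝ × ℝ)) :=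
  {m | m.map Prod.fst ≤ volume.restrict (Ioo (0:ℝ) 1) ∧
       m.map Prod.snd ≤ volume.restrict (Ioo (0:ℝ) 1)}

/-- `α(W) = sup { m(W) : m ∈ M }`. -/
def alpha (W : Set (ℝ × ℝ)) : ℝ≥0∞ := ⨆ m ∈ Mset, m W

/-- `β(W)`: the infimum of `Leb(U)+Leb(V)` over Borel `U, V ⊆ (0,1)`
whose cross `(U×(0,1)) ∪ ((0,1)×V)` covers `W`. -/
def beta (W : Set (ℝ × ℝ)) : ℝ≥0∞ :=
  ⨅ (U : Set ℝ) (V : Set ℝ) (_ : MeasurableSet U) (_ : MeasurableSet V)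
    (_ : U ⊆ Ioo (0:ℝ) 1) (_ : V ⊆ Ioo (0:ℝ) 1)
    (_ : W ⊆ U ×ˢ Ioo (0:ℝ) 1 ∪ Ioo (0:ℝ) 1 ×ˢ V),
    volume U + volume V

/-- A finite union of measurable rectangles `U ×ˢ V`, `U, V` Borel in `(0,1)`. -/
def IsFinUnionRect (S : Set (ℝ × ℝ)) : Prop :=
  ∃ (n : ℕ) (R : Fin n → Set (ℝ × ℝ)),
    (∀ k, ∃ U V : Set ℝ, MeasurableSet U ∧ MeasurableSet V ∧
      U ⊆ Ioo (0:ℝ) 1 ∧ V ⊆ Ioo (0:ℝ) 1 ∧ R k = U ×ˢ V) ∧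
    S = ⋃ k, R k

/-- The class `A_{δσ}`: countable unions of countable intersections of
finite unions of measurable rectangles. -/
def MemADeltaSigma (W : Set (ℝ × ℝ)) : Prop :=
  ∃ G : ℕ → ℕ → Set (ℝ × ℝ),
    (∀ i j, IsFinUnionRect (G i j)) ∧ W = ⋃ i, ⋂ j, G i j

lemma fin_pen (I : Type*) [Fintype I] [DecidableEq I] (a : I → ℝ) (ε : ℝ) (hε : 0 < ε)
    (ha : ∀ i, 0 ≤ a i) (r : I → ℝ) (i0 : I) (t : ℝ) :
    ∑ i, (max ((r i + if i = i0 then t else 0) - a i) 0)^2 / (2 * ε * a i) ≤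
      ∑ i, (max (r i - a i) 0)^2 / (2 * ε * a i)
        + (t * (max (r i0 - a i0) 0 / (ε * a i0)) + t^2 * (1 / (2 * ε * a i0))) := by
  have key : ∀ i, (max ((r i + if i = i0 then t else 0) - a i) 0)^2 / (2 * ε * a i) ≤
      (max (r i - a i) 0)^2 / (2 * ε * a i) +
      if i = i0 then (t * (max (r i0 - a i0) 0 / (ε * a i0)) + t^2 * (1 / (2 * ε * a i0))) else 0 := by
    intro i
    by_cases h : i = i0
    · subst h
      simp only [if_true]
      rcases (ha i).eq_or_lt with h0 | h0
      · simp [← h0]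
      · have e : (max (r i - a i) 0)^2 / (2 * ε * a i) +
            (t * (max (r i - a i) 0 / (ε * a i)) + t^2 * (1 / (2 * ε * a i)))
            = ((max (r i - a i) 0)^2 + 2 * t * max (r i - a i) 0 + t^2) / (2 * ε * a i) := by
          field_simp
          ring
        rw [e]
        apply div_le_div_of_nonneg_right _ (by positivity)
        rcases le_total (r i - a i) 0 with h1 | h1 <;>
        rcases le_total (r i + t - a i) 0 with h2 | h2 <;>
        simp only [max_eq_left, max_eq_right, h1, h2] <;> nlinarith [sq_nonneg (r i - a i + t)]
    · simp [h]
  calc _ ≤ _ := Finset.sum_le_sum fun i _ => key i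
    _ = _ := by rw [Finset.sum_add_distrib]; simp

lemma fin_dual (I J : Type*) [Fintype I] [Fintype J] [DecidableEq I] [DecidableEq J]
    (a : I → ℝ) (b : J → ℝ) (ha : ∀ i, 0 ≤ a i) (hb : ∀ j, 0 ≤ b j)
    (E : I → J → Prop) (hE : ∀ i j, E i j → 0 < a i ∧ 0 < b j) (ε : ℝ) (hε : 0 < ε) :
    ∃ (f : I → J → ℝ) (u : I → ℝ) (v : J → ℝ),
      (∀ i j, 0 ≤ f i j) ∧ (∀ i j, ¬ E i j → f i j = 0) ∧
      (∀ i, ∑ j, f i j ≤ (1 + ε) * a i) ∧ (∀ j, ∑ i, f i j ≤ (1 + ε) * b j) ∧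
      (∀ i, 0 ≤ u i ∧ u i ≤ 1) ∧ (∀ j, 0 ≤ v j ∧ v j ≤ 1) ∧
      (∀ i j, E i j → 1 ≤ u i + v j) ∧
      ∑ i, u i * a i + ∑ j, v j * b j ≤ ∑ i, ∑ j, f i j := by
  classical
  set C : ℝ := 1 + (1 + ε) * ∑ i, a i with hC
  have hsa : 0 ≤ ∑ i, a i := Finset.sum_nonneg fun i _ => ha i
  have hCpos : 0 < C := by positivity
  let top : I → J → ℝ := fun i j => if E i j then C else 0
  let obj : (I → J → ℝ) → ℝ := fun f => ∑ i, ∑ j, f i j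
      - ∑ i, (max ((∑ j, f i j) - a i) 0)^2 / (2 * ε * a i)
      - ∑ j, (max ((∑ i, f i j) - b j) 0)^2 / (2 * ε * b j)
  have hcont : Continuous obj := by
    simp only [obj]
    fun_prop
  have hcomp : IsCompact (Set.Icc (0 : I → J → ℝ) top) := isCompact_Icc
  have hne : (Set.Icc (0 : I → J → ℝ) top).Nonempty := by
    refine ⟨0, le_refl _, ?_⟩
    intro i j
    simp only [top, Pi.zero_apply]
    split_ifs <;> linarith
  obtain ⟨f, hf, hmax⟩ := hcomp.exists_isMaxOn hne hcont.continuousOn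
  have hf0 : ∀ i j, 0 ≤ f i j := fun i j => hf.1 i j
  have hf1 : ∀ i j, f i j ≤ if E i j then C else 0 := fun i j => hf.2 i j
  set r : I → ℝ := fun i => ∑ j, f i j with hr
  set c : J → ℝ := fun j => ∑ i, f i j with hc
  set u : I → ℝ := fun i => max (r i - a i) 0 / (ε * a i) with hu
  set v : J → ℝ := fun j => max (c j - b j) 0 / (ε * b j) with hv
  have hfE : ∀ i j, ¬ E i j → f i j = 0 := by
    intro i j h
    have := hf1 i j
    rw [if_neg h] at this
    exact le_antisymm this (hf0 i j)
  have hu0 : ∀ i, 0 ≤ u i := fun i => div_nonneg (le_max_right _ _) (mul_nonneg hε.le (ha i))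
  have hv0 : ∀ i, 0 ≤ v i := fun i => div_nonneg (le_max_right _ _) (mul_nonneg hε.le (hb i))
  -- first-order condition
  have foc : ∀ i0 j0, E i0 j0 → ∀ t, 0 ≤ f i0 j0 + t → f i0 j0 + t ≤ C →
      t * (1 - u i0 - v j0) ≤ t^2 * (1 / (2 * ε * a i0) + 1 / (2 * ε * b j0)) := by
    intro i0 j0 h0 t ht1 ht2
    let g : I → J → ℝ := fun i j => f i j + if i = i0 then (if j = j0 then t else 0) else 0
    have hg : g ∈ Set.Icc (0 : I → J → ℝ) top := by
      constructor <;> intro i j <;> simp only [g, top, Pi.zero_apply]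
      · by_cases hi : i = i0 <;> by_cases hj : j = j0 <;> simp [hi, hj, hf0]
        exact ht1
      · by_cases hi : i = i0 <;> by_cases hj : j = j0
        · subst hi hj; simpa [h0] using ht2
        all_goals simpa [hi, hj] using hf1 _ _
    have hm : obj g ≤ obj f := hmax hg
    have e1 : ∀ i, ∑ j, g i j = r i + if i = i0 then t else 0 := by
      intro i
      simp only [g, Finset.sum_add_distrib]
      by_cases hi : i = i0 <;> simp [hi, hr]
    have e2 : ∀ j, ∑ i, g i j = c j + if j = j0 then t else 0 := by
      intro j
      simp only [g, Finset.sum_add_distrib]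
      by_cases hj : j = j0 <;> simp [hj, hc]
    have e3 : ∑ i, ∑ j, g i j = ∑ i, ∑ j, f i j + t := by
      simp only [e1, Finset.sum_add_distrib]
      simp [hr]
    have p1 := fin_pen I a ε hε ha r i0 t
    have p2 := fin_pen J b ε hε hb c j0 t
    simp only [obj] at hm
    rw [e3] at hm
    simp only [e1, e2] at hm
    change _ ≤ ∑ i, ∑ j, f i j
      - ∑ i, (max (r i - a i) 0)^2 / (2 * ε * a i)
      - ∑ j, (max (c j - b j) 0)^2 / (2 * ε * b j) at hm
    simp only [hu, hv]
    linarith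
  have hKpos : ∀ i0 j0, E i0 j0 → 0 < 1 / (2 * ε * a i0) + 1 / (2 * ε * b j0) := by
    intro i j h
    obtain ⟨h1, h2⟩ := hE i j h
    positivity
  -- positive entries
  have hpos : ∀ i j, 0 < f i j → u i + v j ≤ 1 := by
    intro i j h
    have hEij : E i j := by
      by_contra h'
      rw [hfE i j h'] at h
      exact lt_irrefl _ h
    by_contra! hlt
    set K := 1 / (2 * ε * a i) + 1 / (2 * ε * b j) with hKdef
    have hK : 0 < K := hKpos i j hEij
    have hCij : f i j ≤ C := by simpa [hEij] using hf1 i j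
    set s := min (f i j) ((u i + v j - 1) / (2 * K)) with hs
    have hs0 : 0 < s := lt_min h (by apply div_pos <;> linarith)
    have hs1 : s ≤ f i j := min_le_left _ _
    have hs2 : s * (2 * K) ≤ (u i + v j - 1) := by
      rw [← le_div_iff₀ (by positivity)]; exact min_le_right _ _
    have := foc i j hEij (-s) (by linarith) (by linarith)
    nlinarith
  have hrow : ∀ i, u i ≤ 1 ∧ r i ≤ (1 + ε) * a i := by
    intro i
    by_cases h : ∃ j, 0 < f i j
    · obtain ⟨j, hj⟩ := h
      have h1 : u i ≤ 1 := by linarith [hpos i j hj, hv0 j]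
      refine ⟨h1, ?_⟩
      have hEij : E i j := by
        by_contra h'
        rw [hfE i j h'] at hj
        exact lt_irrefl _ hj
      have hai := (hE i j hEij).1
      simp only [hu] at h1
      rw [div_le_one (by positivity)] at h1
      linarith [le_max_left (r i - a i) 0]
    · push Not at h
      have : r i = 0 := Finset.sum_eq_zero fun j _ => le_antisymm (h j) (hf0 i j)
      have h3 := ha i
      constructor
      · simp only [hu, this]
        rw [max_eq_right (by linarith)]; simp
      · rw [this]; positivity
  have hcol : ∀ j, v j ≤ 1 ∧ c j ≤ (1 + ε) * b j := by
    intro j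
    by_cases h : ∃ i, 0 < f i j
    · obtain ⟨i, hi⟩ := h
      have h1 : v j ≤ 1 := by linarith [hpos i j hi, hu0 i]
      refine ⟨h1, ?_⟩
      have hEij : E i j := by
        by_contra h'
        rw [hfE i j h'] at hi
        exact lt_irrefl _ hi
      have hai := (hE i j hEij).2
      simp only [hv] at h1
      rw [div_le_one (by positivity)] at h1
      linarith [le_max_left (c j - b j) 0]
    · push Not at h
      have : c j = 0 := Finset.sum_eq_zero fun i _ => le_antisymm (h i) (hf0 i j)
      have h3 := hb j
      constructor
      · simp only [hv, this]
        rw [max_eq_right (by linarith)]; simp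
      · rw [this]; positivity
  have hcov : ∀ i j, E i j → 1 ≤ u i + v j := by
    intro i j hEij
    by_contra! hlt
    set K := 1 / (2 * ε * a i) + 1 / (2 * ε * b j) with hKdef
    have hK : 0 < K := hKpos i j hEij
    have h1 : f i j ≤ r i := Finset.single_le_sum (fun j _ => hf0 i j) (Finset.mem_univ j)
    have h2 : a i ≤ ∑ i, a i := Finset.single_le_sum (fun i _ => ha i) (Finset.mem_univ i)
    have h3 : f i j + 1 ≤ C := by
      have := (hrow i).2
      have : (1 + ε) * a i ≤ (1 + ε) * ∑ i, a i := by gcongr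
      linarith
    set s := min 1 ((1 - u i - v j) / (2 * K)) with hs
    have hs0 : 0 < s := lt_min one_pos (by apply div_pos <;> linarith)
    have hs1 : s ≤ 1 := min_le_left _ _
    have hs2 : s * (2 * K) ≤ (1 - u i - v j) := by
      rw [← le_div_iff₀ (by positivity)]; exact min_le_right _ _
    have := foc i j hEij s (by linarith [hf0 i j]) (by linarith)
    nlinarith
  refine ⟨f, u, v, hf0, hfE, fun i => (hrow i).2, fun j => (hcol j).2,
    fun i => ⟨hu0 i, (hrow i).1⟩, fun j => ⟨hv0 j, (hcol j).1⟩, hcov, ?_⟩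
  have hua : ∀ i, u i * a i ≤ u i * r i := by
    intro i
    rcases le_total (r i) (a i) with h | h
    · have : u i = 0 := by simp only [hu]; rw [max_eq_right (by linarith)]; simp
      simp [this]
    · exact mul_le_mul_of_nonneg_left h (hu0 i)
  have hvb : ∀ i, v i * b i ≤ v i * c i := by
    intro i
    rcases le_total (c i) (b i) with h | h
    · have : v i = 0 := by simp only [hv]; rw [max_eq_right (by linarith)]; simp
      simp [this]
    · exact mul_le_mul_of_nonneg_left h (hv0 i)
  calc _ ≤ ∑ i, u i * r i + ∑ j, v j * c j :=
        add_le_add (Finset.sum_le_sum fun i _ => hua i) (Finset.sum_le_sum fun i _ => hvb i)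
    _ = ∑ i, ∑ j, (u i + v j) * f i j := by
        simp only [hr, hc, Finset.mul_sum, add_mul, Finset.sum_add_distrib]
        congr 1
        exact Finset.sum_comm
    _ ≤ _ := by
        refine Finset.sum_le_sum fun i _ => Finset.sum_le_sum fun j _ => ?_
        rcases (hf0 i j).eq_or_lt with h | h
        · simp [← h]
        · nlinarith [hpos i j h]

/-- Lebesgue measure on the unit interval. -/
def lam : Measure ℝ := volume.restrict (Ioo (0:ℝ) 1)

instance : IsProbabilityMeasure lam := ⟨by simp [lam]⟩

lemma lam_le (U : Set ℝ) (hU : U ⊆ Ioo (0:ℝ) 1) : lam U = volume U := by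
  rw [lam, Measure.restrict_eq_self _ hU]

lemma beta_le_of {W : Set (ℝ × ℝ)} (U V : Set ℝ) (hU : MeasurableSet U) (hV : MeasurableSet V)
    (hU' : U ⊆ Ioo (0:ℝ) 1) (hV' : V ⊆ Ioo (0:ℝ) 1)
    (h : W ⊆ U ×ˢ Ioo (0:ℝ) 1 ∪ Ioo (0:ℝ) 1 ×ˢ V) : beta W ≤ volume U + volume V := by
  unfold beta
  exact iInf_le_of_le U (iInf_le_of_le V (iInf_le_of_le hU (iInf_le_of_le hV
    (iInf_le_of_le hU' (iInf_le_of_le hV' (iInf_le_of_le h le_rfl))))))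

lemma exists_of_beta_lt {W : Set (ℝ × ℝ)} {c : ℝ≥0∞} (hc : beta W < c) :
    ∃ U V : Set ℝ, MeasurableSet U ∧ MeasurableSet V ∧ U ⊆ Ioo (0:ℝ) 1 ∧ V ⊆ Ioo (0:ℝ) 1 ∧
      W ⊆ U ×ˢ Ioo (0:ℝ) 1 ∪ Ioo (0:ℝ) 1 ×ˢ V ∧ volume U + volume V < c := by
  unfold beta at hc
  simp only [iInf_lt_iff] at hc
  obtain ⟨U, V, h1, h2, h3, h4, h5, h6⟩ := hc
  exact ⟨U, V, h1, h2, h3, h4, h5, h6⟩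

lemma beta_mono {W W' : Set (ℝ × ℝ)} (h : W ⊆ W') : beta W ≤ beta W' := by
  by_contra! hlt
  obtain ⟨U, V, h1, h2, h3, h4, h5, h6⟩ := exists_of_beta_lt hlt
  exact absurd (beta_le_of U V h1 h2 h3 h4 (h.trans h5)) (not_le.2 h6)

lemma alpha_mono {W W' : Set (ℝ × ℝ)} (h : W ⊆ W') : alpha W ≤ alpha W' :=
  iSup₂_mono fun _ _ => measure_mono h

lemma Mset_fst {m : Measure (ℝ × ℝ)} (hm : m ∈ Mset) {U : Set ℝ} (hU : MeasurableSet U) :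
    m (U ×ˢ univ) ≤ lam U := by
  have := hm.1 U
  rwa [Measure.map_apply measurable_fst hU, ← prod_univ] at this

lemma Mset_snd {m : Measure (ℝ × ℝ)} (hm : m ∈ Mset) {U : Set ℝ} (hU : MeasurableSet U) :
    m (univ ×ˢ U) ≤ lam U := by
  have := hm.2 U
  rwa [Measure.map_apply measurable_snd hU, ← univ_prod] at this

lemma mem_Mset {m : Measure (ℝ × ℝ)} (h1 : ∀ U, MeasurableSet U → m (U ×ˢ univ) ≤ lam U)
    (h2 : ∀ U, MeasurableSet U → m (univ ×ˢ U) ≤ lam U) : m ∈ Mset := by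
  constructor
  · refine Measure.le_iff.2 fun U hU => ?_
    rw [Measure.map_apply measurable_fst hU, ← prod_univ]
    exact h1 U hU
  · refine Measure.le_iff.2 fun U hU => ?_
    rw [Measure.map_apply measurable_snd hU, ← univ_prod]
    exact h2 U hU

lemma alpha_le_beta (W : Set (ℝ × ℝ)) : alpha W ≤ beta W := by
  refine iSup₂_le fun m hm => ?_
  unfold beta
  refine le_iInf fun U => le_iInf fun V => le_iInf fun hU => le_iInf fun hV => le_iInf fun hU' =>
    le_iInf fun hV' => le_iInf fun h => ?_
  calc m W ≤ m (U ×ˢ univ ∪ univ ×ˢ V) := by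
        refine measure_mono (h.trans ?_)
        gcongr <;> exact subset_univ _
    _ ≤ m (U ×ˢ univ) + m (univ ×ˢ V) := measure_union_le _ _
    _ ≤ _ := by
        rw [← lam_le U hU', ← lam_le V hV']
        exact add_le_add (Mset_fst hm hU) (Mset_snd hm hV)

lemma threshold {W : Set (ℝ × ℝ)} (hW : W ⊆ Ioo (0:ℝ) 1 ×ˢ Ioo (0:ℝ) 1) (u v : ℝ → ℝ)
    (hu : Measurable u) (hv : Measurable v) (hu0 : ∀ x, 0 ≤ u x) (hv0 : ∀ x, 0 ≤ v x)
    (h : ∀ p ∈ W, 1 ≤ u p.1 + v p.2) :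
    beta W ≤ ∫⁻ x, ENNReal.ofReal (u x) ∂lam + ∫⁻ x, ENNReal.ofReal (v x) ∂lam := by
  have m1 : Measurable fun t : ℝ => lam {x | t ≤ u x} := by
    apply Antitone.measurable
    intro s t hst
    exact measure_mono fun x hx => hst.trans hx
  have m2 : Measurable fun t : ℝ => lam {x | t < v x} := by
    apply Antitone.measurable
    intro s t hst
    exact measure_mono fun x hx => lt_of_le_of_lt hst hx
  have mp : MeasurePreserving (fun t : ℝ => 1 - t) lam lam := by
    have := (Measure.measurePreserving_sub_left (volume : Measure ℝ) 1).restrict_preimage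
      (measurableSet_Ioo (a := (0:ℝ)) (b := 1))
    have e : (fun t : ℝ => 1 - t) ⁻¹' Ioo (0:ℝ) 1 = Ioo 0 1 := by ext; simp
    rw [e] at this
    exact this
  have m3 : Measurable fun t : ℝ => lam {x | 1 - t < v x} := m2.comp (measurable_const.sub measurable_id)
  obtain ⟨t, ht⟩ := exists_le_lintegral (μ := lam) (m1.add m3).aemeasurable
  have i1 : ∫⁻ t, lam {x | t ≤ u x} ∂lam ≤ ∫⁻ x, ENNReal.ofReal (u x) ∂lam := by
    rw [lintegral_eq_lintegral_meas_le lam (ae_of_all _ hu0) hu.aemeasurable]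
    exact lintegral_mono' (Measure.restrict_mono (fun x hx => hx.1) le_rfl) le_rfl
  have i2 : ∫⁻ t, lam {x | 1 - t < v x} ∂lam ≤ ∫⁻ x, ENNReal.ofReal (v x) ∂lam := by
    rw [lintegral_eq_lintegral_meas_lt lam (ae_of_all _ hv0) hv.aemeasurable]
    rw [mp.lintegral_comp m2]
    exact lintegral_mono' (Measure.restrict_mono (fun x hx => hx.1) le_rfl) le_rfl
  have hU : MeasurableSet {x | t ≤ u x} := measurableSet_le measurable_const hu
  have hV : MeasurableSet {x | 1 - t < v x} := measurableSet_lt measurable_const hv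
  calc beta W ≤ volume ({x | t ≤ u x} ∩ Ioo 0 1) + volume ({x | 1 - t < v x} ∩ Ioo 0 1) := by
        refine beta_le_of _ _ (hU.inter measurableSet_Ioo) (hV.inter measurableSet_Ioo)
          inter_subset_right inter_subset_right ?_
        intro p hp
        obtain ⟨h1, h2⟩ := hW hp
        have h3 := h p hp
        by_cases h4 : t ≤ u p.1
        · exact Or.inl ⟨⟨h4, h1⟩, h2⟩
        · exact Or.inr ⟨h1, ⟨by simp only [mem_ofPred_eq]; linarith, h2⟩⟩
    _ = lam {x | t ≤ u x} + lam {x | 1 - t < v x} := by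
        rw [lam, Measure.restrict_apply hU, Measure.restrict_apply hV]
    _ ≤ _ := ht
    _ = ∫⁻ t, lam {x | t ≤ u x} ∂lam + ∫⁻ t, lam {x | 1 - t < v x} ∂lam := lintegral_add_left m1 _
    _ ≤ _ := add_le_add i1 i2

/-- finite unions of rectangles, with arbitrary finite index type -/
def FR (S : Set (ℝ × ℝ)) : Prop :=
  ∃ (ι : Type) (_ : Fintype ι) (U V : ι → Set ℝ), (∀ i, MeasurableSet (U i)) ∧
    (∀ i, MeasurableSet (V i)) ∧ (∀ i, U i ⊆ Ioo (0:ℝ) 1) ∧ (∀ i, V i ⊆ Ioo (0:ℝ) 1) ∧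
    S = ⋃ i, U i ×ˢ V i

lemma FR_of {S : Set (ℝ × ℝ)} (h : IsFinUnionRect S) : FR S := by
  obtain ⟨n, R, hR, rfl⟩ := h
  choose U V h1 h2 h3 h4 h5 using hR
  exact ⟨Fin n, inferInstance, U, V, h1, h2, h3, h4, by simp only [h5]⟩

lemma FR.union {S T : Set (ℝ × ℝ)} (hS : FR S) (hT : FR T) : FR (S ∪ T) := by
  obtain ⟨ι, _, U, V, h1, h2, h3, h4, rfl⟩ := hS
  obtain ⟨κ, _, U', V', k1, k2, k3, k4, rfl⟩ := hT
  refine ⟨ι ⊕ κ, inferInstance, Sum.elim U U', Sum.elim V V', ?_, ?_, ?_, ?_, ?_⟩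
  · rintro (i | i) <;> simp [h1, k1]
  · rintro (i | i) <;> simp [h2, k2]
  · rintro (i | i) <;> simp [h3, k3]
  · rintro (i | i) <;> simp [h4, k4]
  · rw [iUnion_sum]; simp

lemma FR.inter {S T : Set (ℝ × ℝ)} (hS : FR S) (hT : FR T) : FR (S ∩ T) := by
  obtain ⟨ι, _, U, V, h1, h2, h3, h4, rfl⟩ := hS
  obtain ⟨κ, _, U', V', k1, k2, k3, k4, rfl⟩ := hT
  refine ⟨ι × κ, inferInstance, fun p => U p.1 ∩ U' p.2, fun p => V p.1 ∩ V' p.2,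
    fun p => (h1 _).inter (k1 _), fun p => (h2 _).inter (k2 _),
    fun p => inter_subset_left.trans (h3 _), fun p => inter_subset_left.trans (h4 _), ?_⟩
  ext p
  simp only [mem_inter_iff, mem_iUnion, mem_prod, Prod.exists]
  constructor
  · rintro ⟨⟨i, a, b⟩, j, c, d⟩; exact ⟨i, j, ⟨a, c⟩, b, d⟩
  · rintro ⟨i, j, ⟨a, c⟩, b, d⟩; exact ⟨⟨i, a, b⟩, j, c, d⟩

lemma FR.sub {S : Set (ℝ × ℝ)} (hS : FR S) : S ⊆ Ioo (0:ℝ) 1 ×ˢ Ioo (0:ℝ) 1 := by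
  obtain ⟨ι, _, U, V, h1, h2, h3, h4, rfl⟩ := hS
  exact iUnion_subset fun i => prod_mono (h3 i) (h4 i)

lemma FR.meas {S : Set (ℝ × ℝ)} (hS : FR S) : MeasurableSet S := by
  obtain ⟨ι, _, U, V, h1, h2, h3, h4, rfl⟩ := hS
  exact MeasurableSet.iUnion fun i => (h1 i).prod (h2 i)

/-- closed sets approximate `S` from inside uniformly over `Mset` -/
lemma FR.approx {S : Set (ℝ × ℝ)} (hS : FR S) (ε : ℝ≥0∞) (hε : ε ≠ 0) :
    ∃ F ⊆ S, IsClosed F ∧ ∀ m ∈ Mset, m S ≤ m F + ε := by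
  obtain ⟨ι, _, U, V, h1, h2, h3, h4, rfl⟩ := hS
  set δ : ℝ≥0∞ := ε / (2 * Fintype.card ι) with hδ
  have hδ0 : δ ≠ 0 := by
    refine (ENNReal.div_pos hε ?_).ne'
    exact ENNReal.mul_ne_top (by simp) (by simp)
  choose K hKU hKc hK using fun i => (h1 i).exists_isClosed_sdiff_lt (μ := lam) (measure_ne_top _ _) hδ0
  choose L hLV hLc hL using fun i => (h2 i).exists_isClosed_sdiff_lt (μ := lam) (measure_ne_top _ _) hδ0
  refine ⟨⋃ i, K i ×ˢ L i, iUnion_mono fun i => prod_mono (hKU i) (hLV i),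
    isClosed_iUnion_of_finite fun i => (hKc i).prod (hLc i), fun m hm => ?_⟩
  calc m (⋃ i, U i ×ˢ V i)
      ≤ m ((⋃ i, K i ×ˢ L i) ∪ ⋃ i, ((U i \ K i) ×ˢ univ ∪ univ ×ˢ (V i \ L i))) := by
        refine measure_mono ?_
        rintro p hp
        obtain ⟨i, hi⟩ := mem_iUnion.1 hp
        by_cases a : p.1 ∈ K i
        · by_cases b : p.2 ∈ L i
          · exact Or.inl (mem_iUnion.2 ⟨i, a, b⟩)
          · exact Or.inr (mem_iUnion.2 ⟨i, Or.inr ⟨trivial, hi.2, b⟩⟩)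
        · exact Or.inr (mem_iUnion.2 ⟨i, Or.inl ⟨⟨hi.1, a⟩, trivial⟩⟩)
    _ ≤ m (⋃ i, K i ×ˢ L i) + m (⋃ i, ((U i \ K i) ×ˢ univ ∪ univ ×ˢ (V i \ L i))) :=
        measure_union_le _ _
    _ ≤ m (⋃ i, K i ×ˢ L i) + ε := by
        gcongr
        calc _ ≤ ∑ i, m ((U i \ K i) ×ˢ univ ∪ univ ×ˢ (V i \ L i)) := measure_iUnion_fintype_le _ _
          _ ≤ ∑ i : ι, (δ + δ) := by
            refine Finset.sum_le_sum fun i _ => (measure_union_le _ _).trans (add_le_add ?_ ?_)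
            · exact (Mset_fst hm ((h1 i).diff (hKc i).measurableSet)).trans (hK i).le
            · exact (Mset_snd hm ((h2 i).diff (hLc i).measurableSet)).trans (hL i).le
          _ = (2 * Fintype.card ι) * δ := by
            simp only [Finset.sum_const, Finset.card_univ, nsmul_eq_mul]; ring
          _ ≤ ε := ENNReal.mul_div_le

lemma FR.beta_le {S : Set (ℝ × ℝ)} (hS : FR S) : beta S ≤ alpha S := by
  classical
  have hsub := hS.sub
  obtain ⟨ι, _, U, V, h1, h2, h3, h4, hSe⟩ := hS
  let σ : ℝ → ι → Bool := fun x i => decide (x ∈ U i)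
  let τ : ℝ → ι → Bool := fun x i => decide (x ∈ V i)
  have hσ : Measurable σ := measurable_pi_lambda _ fun i => by
    apply measurable_to_bool
    have : (fun x => decide (x ∈ U i)) ⁻¹' {true} = U i := by ext; simp
    simpa only [σ, this] using h1 i
  have hτ : Measurable τ := measurable_pi_lambda _ fun i => by
    apply measurable_to_bool
    have : (fun x => decide (x ∈ V i)) ⁻¹' {true} = V i := by ext; simp
    simpa only [τ, this] using h2 i
  let A : (ι → Bool) → Set ℝ := fun s => σ ⁻¹' {s}
  let B : (ι → Bool) → Set ℝ := fun s => τ ⁻¹' {s}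
  have hA : ∀ s, MeasurableSet (A s) := fun s => hσ (measurableSet_singleton s)
  have hB : ∀ s, MeasurableSet (B s) := fun s => hτ (measurableSet_singleton s)
  let a : (ι → Bool) → ℝ := fun s => lam.real (A s)
  let b : (ι → Bool) → ℝ := fun s => lam.real (B s)
  have ha : ∀ s, 0 ≤ a s := fun s => measureReal_nonneg
  have hb : ∀ s, 0 ≤ b s := fun s => measureReal_nonneg
  have haE : ∀ s, ENNReal.ofReal (a s) = lam (A s) := fun s => by simp [a]
  have hbE : ∀ s, ENNReal.ofReal (b s) = lam (B s) := fun s => by simp [b]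
  let E0 : (ι → Bool) → (ι → Bool) → Prop := fun s t => ∃ i, s i = true ∧ t i = true
  have hmem : ∀ p : ℝ × ℝ, p ∈ S ↔ E0 (σ p.1) (τ p.2) := by
    intro p
    simp [hSe, E0, σ, τ]
  -- partition identities
  have partA : ∀ X, MeasurableSet X → ∑ s, lam (X ∩ A s) = lam X := by
    intro X hX
    have e : X = ⋃ s ∈ (Finset.univ : Finset (ι → Bool)), X ∩ A s := by ext x; simp [A]
    conv_rhs => rw [e]
    rw [measure_biUnion_finset]
    · intro s _ t _ hst
      refine Set.disjoint_left.2 fun x hx hx' => hst ?_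
      exact hx.2.symm.trans hx'.2
    · exact fun s _ => hX.inter (hA s)
  have partB : ∀ X, MeasurableSet X → ∑ s, lam (X ∩ B s) = lam X := by
    intro X hX
    have e : X = ⋃ s ∈ (Finset.univ : Finset (ι → Bool)), X ∩ B s := by ext x; simp [B]
    conv_rhs => rw [e]
    rw [measure_biUnion_finset]
    · intro s _ t _ hst
      refine Set.disjoint_left.2 fun x hx hx' => hst ?_
      exact hx.2.symm.trans hx'.2
    · exact fun s _ => hX.inter (hB s)
  have main : ∀ ε : ℝ, 0 < ε → beta S ≤ ENNReal.ofReal (1 + ε) * alpha S := by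
    intro ε hε
    obtain ⟨f, u, v, hf0, hfE, hr, hc, hu, hv, hcov, hval⟩ := fin_dual (ι → Bool) (ι → Bool) a b ha hb
      (fun s t => E0 s t ∧ 0 < a s ∧ 0 < b t) (fun s t h => h.2) ε hε
    -- upper bound for beta
    let u' : (ι → Bool) → ℝ := fun s => if a s = 0 then 1 else u s
    let v' : (ι → Bool) → ℝ := fun s => if b s = 0 then 1 else v s
    have hu' : ∀ s, 0 ≤ u' s := fun s => by
      simp only [u']; split_ifs; exacts [zero_le_one, (hu s).1]
    have hv' : ∀ s, 0 ≤ v' s := fun s => by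
      simp only [v']; split_ifs; exacts [zero_le_one, (hv s).1]
    have b1 : beta S ≤ ENNReal.ofReal (∑ s, ∑ t, f s t) := by
      have := threshold hsub (fun x => u' (σ x)) (fun x => v' (τ x))
        ((measurable_of_finite u').comp hσ) ((measurable_of_finite v').comp hτ)
        (fun x => hu' _) (fun x => hv' _) (by
          intro p hp
          have hp := (hmem p).1 hp
          by_cases h5 : a (σ p.1) = 0
          · have := hv' (τ p.2)
            simp only [u', if_pos h5]; linarith
          by_cases h6 : b (τ p.2) = 0
          · have := hu' (σ p.1)
            simp only [v', if_pos h6]; linarith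
          simp only [u', v', if_neg h5, if_neg h6]
          exact hcov _ _ ⟨hp, lt_of_le_of_ne (ha _) (Ne.symm h5), lt_of_le_of_ne (hb _) (Ne.symm h6)⟩)
      refine this.trans ?_
      have e1 : ∫⁻ x, ENNReal.ofReal (u' (σ x)) ∂lam = ENNReal.ofReal (∑ s, u s * a s) := by
        rw [← lintegral_map (f := fun s => ENNReal.ofReal (u' s)) (measurable_of_finite _) hσ,
          lintegral_fintype, ENNReal.ofReal_sum_of_nonneg fun s _ => mul_nonneg (hu s).1 (ha s)]
        refine Finset.sum_congr rfl fun s _ => ?_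
        rw [Measure.map_apply hσ (measurableSet_singleton s), ENNReal.ofReal_mul (hu s).1, haE]
        by_cases h5 : a s = 0
        · have : lam (A s) = 0 := by rw [← haE, h5]; simp
          change _ * lam (A s) = _
          rw [this]; simp
        · simp only [u', if_neg h5]; rfl
      have e2 : ∫⁻ x, ENNReal.ofReal (v' (τ x)) ∂lam = ENNReal.ofReal (∑ s, v s * b s) := by
        rw [← lintegral_map (f := fun s => ENNReal.ofReal (v' s)) (measurable_of_finite _) hτ,
          lintegral_fintype, ENNReal.ofReal_sum_of_nonneg fun s _ => mul_nonneg (hv s).1 (hb s)]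
        refine Finset.sum_congr rfl fun s _ => ?_
        rw [Measure.map_apply hτ (measurableSet_singleton s), ENNReal.ofReal_mul (hv s).1, hbE]
        by_cases h5 : b s = 0
        · have : lam (B s) = 0 := by rw [← hbE, h5]; simp
          change _ * lam (B s) = _
          rw [this]; simp
        · simp only [v', if_neg h5]; rfl
      rw [e1, e2, ← ENNReal.ofReal_add
        (Finset.sum_nonneg fun s _ => mul_nonneg (hu s).1 (ha s))
        (Finset.sum_nonneg fun s _ => mul_nonneg (hv s).1 (hb s))]
      exact ENNReal.ofReal_le_ofReal hval
    -- the measure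
    have hε1 : 0 < 1 + ε := by linarith
    let c : (ι → Bool) → (ι → Bool) → ℝ := fun s t => f s t / ((1 + ε) * (a s * b t))
    have hc0 : ∀ s t, 0 ≤ c s t := fun s t =>
      div_nonneg (hf0 s t) (mul_nonneg hε1.le (mul_nonneg (ha s) (hb t)))
    let m : Measure (ℝ × ℝ) := ∑ s, ∑ t, ENNReal.ofReal (c s t) •
      ((lam.restrict (A s)).prod (lam.restrict (B t)))
    have hm : ∀ X Y, MeasurableSet X → MeasurableSet Y → m (X ×ˢ Y) =
        ∑ s, ∑ t, ENNReal.ofReal (c s t) * (lam (X ∩ A s) * lam (Y ∩ B t)) := by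
      intro X Y hX hY
      simp only [m, Measure.finsetSum_apply, Measure.smul_apply, Measure.prod_prod, smul_eq_mul,
        Measure.restrict_apply hX, Measure.restrict_apply hY]
    have hrow : ∀ s, ∑ t, c s t * b t ≤ 1 := by
      intro s
      rcases (ha s).eq_or_lt with h0 | h0
      · simp [c, ← h0]
      · have : ∀ t, c s t * b t ≤ f s t / ((1 + ε) * a s) := by
          intro t
          rcases (hb t).eq_or_lt with h5 | h5
          · rw [← h5]; simp; exact div_nonneg (hf0 s t) (by positivity)
          · simp only [c]; apply le_of_eq; field_simp
        calc _ ≤ ∑ t, f s t / ((1 + ε) * a s) := Finset.sum_le_sum fun t _ => this t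
          _ = (∑ t, f s t) / ((1 + ε) * a s) := by rw [Finset.sum_div]
          _ ≤ 1 := by rw [div_le_one (by positivity)]; exact hr s
    have hcol : ∀ t, ∑ s, c s t * a s ≤ 1 := by
      intro t
      rcases (hb t).eq_or_lt with h0 | h0
      · simp [c, ← h0]
      · have : ∀ s, c s t * a s ≤ f s t / ((1 + ε) * b t) := by
          intro s
          rcases (ha s).eq_or_lt with h5 | h5
          · rw [← h5]; simp; exact div_nonneg (hf0 s t) (by positivity)
          · simp only [c]; apply le_of_eq; field_simp
        calc _ ≤ ∑ s, f s t / ((1 + ε) * b t) := Finset.sum_le_sum fun s _ => this s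
          _ = (∑ s, f s t) / ((1 + ε) * b t) := by rw [Finset.sum_div]
          _ ≤ 1 := by rw [div_le_one (by positivity)]; exact hc t
    have hmM : m ∈ Mset := by
      apply mem_Mset
      · intro X hX
        rw [hm X univ hX MeasurableSet.univ, ← partA X hX]
        refine Finset.sum_le_sum fun s _ => ?_
        calc _ = ENNReal.ofReal (∑ t, c s t * b t) * lam (X ∩ A s) := by
              rw [ENNReal.ofReal_sum_of_nonneg fun t _ => mul_nonneg (hc0 s t) (hb t),
                Finset.sum_mul]
              refine Finset.sum_congr rfl fun t _ => ?_
              rw [univ_inter, ENNReal.ofReal_mul (hc0 s t), hbE]; ring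
          _ ≤ 1 * lam (X ∩ A s) := by
              gcongr
              exact ENNReal.ofReal_le_one.2 (hrow s)
          _ = _ := one_mul _
      · intro X hX
        rw [hm univ X MeasurableSet.univ hX, ← partB X hX, Finset.sum_comm]
        refine Finset.sum_le_sum fun t _ => ?_
        calc _ = ENNReal.ofReal (∑ s, c s t * a s) * lam (X ∩ B t) := by
              rw [ENNReal.ofReal_sum_of_nonneg fun s _ => mul_nonneg (hc0 s t) (ha s),
                Finset.sum_mul]
              refine Finset.sum_congr rfl fun s _ => ?_
              rw [univ_inter, ENNReal.ofReal_mul (hc0 s t), haE]; ring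
          _ ≤ 1 * lam (X ∩ B t) := by
              gcongr
              exact ENNReal.ofReal_le_one.2 (hcol t)
          _ = _ := one_mul _
    have hmS : ENNReal.ofReal (∑ s, ∑ t, f s t) ≤ ENNReal.ofReal (1 + ε) * m S := by
      have e : m S = ∑ s, ∑ t, ENNReal.ofReal (c s t) *
          ((lam.restrict (A s)).prod (lam.restrict (B t))) S := by
        simp only [m, Measure.finsetSum_apply, Measure.smul_apply, smul_eq_mul]
      rw [e, Finset.mul_sum, ENNReal.ofReal_sum_of_nonneg fun s _ => Finset.sum_nonneg fun t _ => hf0 s t]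
      refine Finset.sum_le_sum fun s _ => ?_
      rw [Finset.mul_sum, ENNReal.ofReal_sum_of_nonneg fun t _ => hf0 s t]
      refine Finset.sum_le_sum fun t _ => ?_
      by_cases hst : E0 s t ∧ 0 < a s ∧ 0 < b t
      · obtain ⟨h5, h6, h7⟩ := hst
        have hin : A s ×ˢ B t ⊆ S := by
          rintro p ⟨hp1, hp2⟩
          rw [hmem]
          have q1 : σ p.1 = s := hp1
          have q2 : τ p.2 = t := hp2
          rw [q1, q2]; exact h5
        calc ENNReal.ofReal (f s t) = ENNReal.ofReal ((1 + ε) * (c s t * (a s * b t))) := by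
              congr 1; simp only [c]; field_simp
          _ = ENNReal.ofReal (1 + ε) * (ENNReal.ofReal (c s t) * (lam (A s) * lam (B t))) := by
              rw [ENNReal.ofReal_mul hε1.le, ENNReal.ofReal_mul (hc0 s t), ENNReal.ofReal_mul (ha s),
                haE, hbE]
          _ = ENNReal.ofReal (1 + ε) * (ENNReal.ofReal (c s t) *
                ((lam.restrict (A s)).prod (lam.restrict (B t))) (A s ×ˢ B t)) := by
              rw [Measure.prod_prod, Measure.restrict_apply_self, Measure.restrict_apply_self]
          _ ≤ _ := by gcongr
      · rw [hfE s t hst]; simp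
    refine b1.trans (hmS.trans ?_)
    gcongr
    exact le_iSup₂_of_le m hmM le_rfl
  have hlim : Filter.Tendsto (fun ε : ℝ => ENNReal.ofReal (1 + ε) * alpha S) (nhdsWithin 0 (Ioi 0))
      (nhds (ENNReal.ofReal (1 + 0) * alpha S)) := by
    apply ENNReal.Tendsto.mul_const
    · apply ENNReal.tendsto_ofReal
      apply tendsto_nhdsWithin_of_tendsto_nhds
      exact (continuous_const.add continuous_id).tendsto 0
    · left; simp
  have := ge_of_tendsto hlim (eventually_nhdsWithin_of_forall fun ε hε => main ε hε)
  simpa using this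

lemma beta_le_alpha_iInter (D : ℕ → Set (ℝ × ℝ)) (hD : ∀ n, FR (D n)) (hanti : Antitone D) :
    beta (⋂ n, D n) ≤ alpha (⋂ n, D n) := by
  refine le_of_forall_lt_imp_le_of_dense fun c hc => ?_
  have ex : ∀ n, ∃ m ∈ Mset, c < m (D n) := by
    intro n
    have h : c < alpha (D n) := hc.trans_le ((beta_mono (iInter_subset _ n)).trans (hD n).beta_le)
    simp only [alpha, lt_iSup_iff] at h
    obtain ⟨m, hm, h⟩ := h
    exact ⟨m, hm, h⟩
  choose m hm hmc using ex
  have hmass : ∀ n, m n univ ≤ 1 := by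
    intro n
    have := Mset_fst (hm n) MeasurableSet.univ
    rwa [univ_prod_univ, measure_univ (μ := lam)] at this
  have hfin : ∀ n, IsFiniteMeasure (m n) := fun n => ⟨(hmass n).trans_lt ENNReal.one_lt_top⟩
  let M : ℕ → FiniteMeasure (ℝ × ℝ) := fun n => ⟨m n, hfin n⟩
  let K : Set (ℝ × ℝ) := Icc (0:ℝ) 1 ×ˢ Icc (0:ℝ) 1
  have hK : IsCompact K := isCompact_Icc.prod isCompact_Icc
  have hcompact := isCompact_setOfPred_finiteMeasure_le_of_isCompact 1 hK
  have hlamc : lam (Icc (0:ℝ) 1)ᶜ = 0 := by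
    rw [lam, Measure.restrict_apply measurableSet_Icc.compl]
    convert measure_empty (μ := (volume : Measure ℝ))
    ext x
    simp only [mem_inter_iff, mem_compl_iff, mem_Icc, mem_Ioo, mem_empty_iff_false, iff_false]
    rintro ⟨h1, h2, h3⟩
    exact h1 ⟨h2.le, h3.le⟩
  have hMK : ∀ n, M n ∈ {μ : FiniteMeasure (ℝ × ℝ) | μ.mass ≤ 1 ∧ μ Kᶜ = 0} := by
    intro n
    constructor
    · rw [← ENNReal.coe_le_coe, FiniteMeasure.ennreal_mass]
      exact hmass n
    · rw [FiniteMeasure.null_iff_toMeasure_null]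
      change m n Kᶜ = 0
      refine le_antisymm ?_ zero_le
      calc m n Kᶜ ≤ m n ((Icc (0:ℝ) 1)ᶜ ×ˢ univ ∪ univ ×ˢ (Icc (0:ℝ) 1)ᶜ) := by
            refine measure_mono ?_
            intro p hp
            by_contra hcon
            apply hp
            simp only [mem_union, mem_prod, mem_univ, and_true, true_and, mem_compl_iff, not_or, not_not] at hcon
            exact hcon
        _ ≤ m n ((Icc (0:ℝ) 1)ᶜ ×ˢ univ) + m n (univ ×ˢ (Icc (0:ℝ) 1)ᶜ) := measure_union_le _ _
        _ ≤ 0 + 0 := by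
            refine add_le_add ?_ ?_
            · exact (Mset_fst (hm n) measurableSet_Icc.compl).trans hlamc.le
            · exact (Mset_snd (hm n) measurableSet_Icc.compl).trans hlamc.le
        _ = 0 := by simp
  let F : Ultrafilter ℕ := Filter.hyperfilter ℕ
  obtain ⟨μ, -, hμ⟩ := hcompact.ultrafilter_le_nhds (F.map M) (by
    rw [Filter.le_principal_iff]
    exact Filter.mem_map.2 (Filter.univ_mem' hMK))
  have hlim : Filter.Tendsto M F (nhds μ) := hμ
  have hF : (F : Filter ℕ) ≤ Filter.atTop := Nat.hyperfilter_le_atTop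
  have hclosed : ∀ C : Set (ℝ × ℝ), IsClosed C → ∀ c : ℝ≥0∞, (∀ᶠ n in (F : Filter ℕ), c ≤ m n C) →
      c ≤ (μ : Measure (ℝ × ℝ)) C := by
    intro C hC c h
    refine le_trans ?_ (FiniteMeasure.limsup_measure_closed_le_of_tendsto hlim hC)
    exact Filter.le_limsup_of_frequently_le h.frequently
  have hopen : ∀ C : Set (ℝ × ℝ), IsOpen C → ∀ c : ℝ≥0∞, (∀ n, m n C ≤ c) →
      (μ : Measure (ℝ × ℝ)) C ≤ c := by
    intro C hC c h
    have hmasslim : Filter.Tendsto (fun n => m n univ) F (nhds ((μ : Measure (ℝ × ℝ)) univ)) := by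
      have := (FiniteMeasure.continuous_mass.tendsto μ).comp hlim
      have := ENNReal.tendsto_coe.2 this
      simp only [Function.comp_def, FiniteMeasure.ennreal_mass] at this
      exact this
    have h1 : (μ : Measure (ℝ × ℝ)) univ ≤ (μ : Measure (ℝ × ℝ)) Cᶜ + c := by
      refine le_of_forall_lt_imp_le_of_dense fun d hd => ?_
      have hev : ∀ᶠ n in (F : Filter ℕ), d < m n univ := hmasslim.eventually (lt_mem_nhds hd)
      rw [← tsub_le_iff_right]
      apply hclosed _ hC.isClosed_compl
      filter_upwards [hev] with n hn
      rw [tsub_le_iff_right]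
      refine hn.le.trans ?_
      rw [← union_compl_self C, union_comm]
      exact (measure_union_le _ _).trans (by gcongr; exact h n)
    rw [← measure_add_measure_compl hC.measurableSet, add_comm] at h1
    exact (ENNReal.add_le_add_iff_left (measure_ne_top _ _)).1 h1
  have hμM : (μ : Measure (ℝ × ℝ)) ∈ Mset := by
    apply mem_Mset
    · intro U hU
      refine ENNReal.le_of_forall_pos_le_add fun ε hε _ => ?_
      obtain ⟨O, hUO, hO, hOl⟩ := U.exists_isOpen_le_add lam (ε := (ε : ℝ≥0∞)) (by positivity)
      refine le_trans (measure_mono (prod_mono_left hUO)) (le_trans ?_ hOl)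
      exact hopen _ (hO.prod isOpen_univ) _ fun n => Mset_fst (hm n) hO.measurableSet
    · intro U hU
      refine ENNReal.le_of_forall_pos_le_add fun ε hε _ => ?_
      obtain ⟨O, hUO, hO, hOl⟩ := U.exists_isOpen_le_add lam (ε := (ε : ℝ≥0∞)) (by positivity)
      refine le_trans (measure_mono (prod_mono_right hUO)) (le_trans ?_ hOl)
      exact hopen _ (isOpen_univ.prod hO) _ fun n => Mset_snd (hm n) hO.measurableSet
  have hk : ∀ k, c ≤ (μ : Measure (ℝ × ℝ)) (D k) := by
    intro k
    refine ENNReal.le_of_forall_pos_le_add fun ε hε _ => ?_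
    obtain ⟨C, hCD, hC, happ⟩ := (hD k).approx (ε : ℝ≥0∞) (by positivity)
    refine le_trans ?_ (add_le_add_left (measure_mono hCD) _)
    rw [← tsub_le_iff_right]
    apply hclosed _ hC
    filter_upwards [hF (Filter.eventually_ge_atTop k)] with n hn
    rw [tsub_le_iff_right]
    exact (hmc n).le.trans ((measure_mono (hanti hn)).trans (happ _ (hm n)))
  have : c ≤ (μ : Measure (ℝ × ℝ)) (⋂ n, D n) := by
    rw [hanti.measure_iInter (fun n => (hD n).meas.nullMeasurableSet) ⟨0, measure_ne_top _ _⟩]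
    exact le_iInf hk
  exact this.trans (le_iSup₂_of_le (μ : Measure (ℝ × ℝ)) hμM le_rfl)

lemma integrable_of_bdd {w : ℝ → ℝ} (hw : Measurable w) (C : ℝ) (h : ∀ x, |w x| ≤ C) :
    Integrable w lam :=
  Integrable.of_bound hw.aestronglyMeasurable C (ae_of_all _ h)

lemma beta_iUnion_le (W : ℕ → Set (ℝ × ℝ)) (hmono : Monotone W)
    (hsub : ∀ n, W n ⊆ Ioo (0:ℝ) 1 ×ˢ Ioo (0:ℝ) 1) (L : ℝ)
    (hL : ∀ n, beta (W n) < ENNReal.ofReal L) : beta (⋃ n, W n) ≤ ENNReal.ofReal L := by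
  let K : ℕ → Set ((ℝ → ℝ) × (ℝ → ℝ)) := fun n => {q | Measurable q.1 ∧ Measurable q.2 ∧
    (∀ x, 0 ≤ q.1 x ∧ q.1 x ≤ 1) ∧ (∀ x, 0 ≤ q.2 x ∧ q.2 x ≤ 1) ∧
    (∀ p ∈ W n, 1 ≤ q.1 p.1 + q.2 p.2) ∧ ∫ x, q.1 x ∂lam + ∫ x, q.2 x ∂lam ≤ L}
  let Q : (ℝ → ℝ) × (ℝ → ℝ) → ℝ := fun q => ∫ x, (q.1 x)^2 ∂lam + ∫ x, (q.2 x)^2 ∂lam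
  have hKne : ∀ n, (K n).Nonempty := by
    intro n
    obtain ⟨U, V, h1, h2, h3, h4, h5, h6⟩ := exists_of_beta_lt (hL n)
    refine ⟨(U.indicator 1, V.indicator 1), measurable_one.indicator h1, measurable_one.indicator h2, ?_, ?_, ?_, ?_⟩
    · intro x; by_cases hx : x ∈ U <;> simp [hx]
    · intro x; by_cases hx : x ∈ V <;> simp [hx]
    · intro p hp
      have n1 : (0:ℝ) ≤ U.indicator 1 p.1 := indicator_nonneg (fun _ _ => zero_le_one) _
      have n2 : (0:ℝ) ≤ V.indicator 1 p.2 := indicator_nonneg (fun _ _ => zero_le_one) _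
      rcases h5 hp with h | h
      · have : U.indicator (1 : ℝ → ℝ) p.1 = 1 := by simp [h.1]
        simp only; linarith
      · have : V.indicator (1 : ℝ → ℝ) p.2 = 1 := by simp [h.2]
        simp only; linarith
    · simp only
      rw [integral_indicator_one h1, integral_indicator_one h2]
      simp only [measureReal_def, lam_le U h3, lam_le V h4]
      have hU : volume U ≠ ∞ := by rw [← lam_le U h3]; exact measure_ne_top _ _
      have hV : volume V ≠ ∞ := by rw [← lam_le V h4]; exact measure_ne_top _ _
      rw [← ENNReal.toReal_add hU hV]
      have hL0 : 0 < L := by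
        by_contra! hcon
        rw [ENNReal.ofReal_of_nonpos hcon] at h6
        exact not_lt_zero h6
      exact ENNReal.toReal_le_of_le_ofReal hL0.le h6.le
  have hKanti : ∀ i j, i ≤ j → K j ⊆ K i := by
    rintro i j hij q ⟨h1, h2, h3, h4, h5, h6⟩
    exact ⟨h1, h2, h3, h4, fun p hp => h5 p (hmono hij hp), h6⟩
  have hQ0 : ∀ q, 0 ≤ Q q := fun q =>
    add_nonneg (integral_nonneg fun x => sq_nonneg _) (integral_nonneg fun x => sq_nonneg _)
  have hbd : ∀ n, BddBelow (Q '' K n) := fun n => ⟨0, by rintro _ ⟨q, _, rfl⟩; exact hQ0 q⟩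
  let d : ℕ → ℝ := fun n => sInf (Q '' K n)
  have hdm : Monotone d := fun i j hij =>
    csInf_le_csInf (hbd i) ((hKne j).image _) (image_mono (hKanti i j hij))
  have hd_le : ∀ n q, q ∈ K n → d n ≤ Q q := fun n q hq => csInf_le (hbd n) ⟨q, hq, rfl⟩
  have intg : ∀ w : ℝ → ℝ, Measurable w → (∀ x, |w x| ≤ 1) → ∫ x, w x ∂lam ≤ 1 := by
    intro w hw h
    calc ∫ x, w x ∂lam ≤ ∫ x, (1:ℝ) ∂lam := integral_mono (integrable_of_bdd hw 1 h)
          (integrable_const _) fun x => (le_abs_self _).trans (h x)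
      _ = 1 := by simp
  have hd2 : ∀ n, d n ≤ 2 := by
    intro n
    obtain ⟨q, hq⟩ := hKne n
    refine (hd_le n q hq).trans ?_
    obtain ⟨h1, h2, h3, h4, -, -⟩ := hq
    have i1 := intg (fun x => (q.1 x)^2) (h1.pow_const 2) (fun x => by
      rw [abs_of_nonneg (sq_nonneg _)]; have := h3 x; nlinarith)
    have i2 := intg (fun x => (q.2 x)^2) (h2.pow_const 2) (fun x => by
      rw [abs_of_nonneg (sq_nonneg _)]; have := h4 x; nlinarith)
    simp only [Q]; linarith
  have hdb : BddAbove (range d) := ⟨2, by rintro _ ⟨n, rfl⟩; exact hd2 n⟩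
  set D : ℝ := ⨆ n, d n with hDdef
  have hdD : ∀ n, d n ≤ D := fun n => le_ciSup hdb n
  let η : ℕ → ℝ := fun k => (1/2)^k
  have hη : ∀ k, 0 < η k := fun k => by positivity
  have hηanti : ∀ i j, i ≤ j → η j ≤ η i := fun i j hij =>
    pow_le_pow_of_le_one (by norm_num) (by norm_num) hij
  have hex : ∀ k, ∃ n q, k ≤ n ∧ q ∈ K n ∧ D - (η k)^2/16 ≤ d n ∧ Q q ≤ D + (η k)^2/16 := by
    intro k
    have hk := hη k
    have hk2 : 0 < (η k)^2/16 := by positivity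
    obtain ⟨n, hn⟩ := exists_lt_of_lt_ciSup (show D - (η k)^2/16 < ⨆ n, d n by linarith)
    have : d (max n k) < D + (η k)^2/16 := by linarith [hdD (max n k)]
    obtain ⟨_, ⟨q, hq, rfl⟩, hq2⟩ := exists_lt_of_csInf_lt ((hKne (max n k)).image _) this
    exact ⟨max n k, q, le_max_right _ _, hq, hn.le.trans (hdm (le_max_left _ _)), hq2.le⟩
  choose N q hNk hqK hdN hQq using hex
  have hq1 : ∀ k, Measurable (q k).1 := fun k => (hqK k).1
  have hq2 : ∀ k, Measurable (q k).2 := fun k => (hqK k).2.1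
  have hq3 : ∀ k x, 0 ≤ (q k).1 x ∧ (q k).1 x ≤ 1 := fun k => (hqK k).2.2.1
  have hq4 : ∀ k x, 0 ≤ (q k).2 x ∧ (q k).2 x ≤ 1 := fun k => (hqK k).2.2.2.1
  have hq5 : ∀ k, ∀ p ∈ W (N k), 1 ≤ (q k).1 p.1 + (q k).2 p.2 := fun k => (hqK k).2.2.2.2.1
  have hq6 : ∀ k, ∫ x, (q k).1 x ∂lam + ∫ x, (q k).2 x ∂lam ≤ L := fun k => (hqK k).2.2.2.2.2
  -- parallelogram estimate
  have half : ∀ f g : ℝ → ℝ, Measurable f → Measurable g → (∀ x, 0 ≤ f x ∧ f x ≤ 1) →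
      (∀ x, 0 ≤ g x ∧ g x ≤ 1) →
      ∫ x, (f x - g x)^2 ∂lam = 2 * ∫ x, (f x)^2 ∂lam + 2 * ∫ x, (g x)^2 ∂lam
        - 4 * ∫ x, ((f x + g x)/2)^2 ∂lam := by
    intro f g hf hg hf1 hg1
    have j1 : Integrable (fun x => (f x)^2) lam := integrable_of_bdd (hf.pow_const 2) 1 fun x => by
      rw [abs_of_nonneg (sq_nonneg _)]; have := hf1 x; nlinarith
    have j2 : Integrable (fun x => (g x)^2) lam := integrable_of_bdd (hg.pow_const 2) 1 fun x => by
      rw [abs_of_nonneg (sq_nonneg _)]; have := hg1 x; nlinarith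
    have j3 : Integrable (fun x => ((f x + g x)/2)^2) lam :=
      integrable_of_bdd (((hf.add hg).div_const 2).pow_const 2) 1 fun x => by
      rw [abs_of_nonneg (sq_nonneg _)]; have := hf1 x; have := hg1 x; nlinarith
    have j4 : Integrable (fun x => 2 * (f x)^2 + 2 * (g x)^2) lam :=
      (j1.const_mul 2).add (j2.const_mul 2)
    rw [← integral_const_mul, ← integral_const_mul, ← integral_const_mul,
      ← integral_add (j1.const_mul 2) (j2.const_mul 2),
      ← integral_sub j4 (j3.const_mul 4)]
    congr 1
    ext x
    ring
  have cau : ∀ n i j, n ≤ i → n ≤ j → ∫ x, ((q i).1 x - (q j).1 x)^2 ∂lam +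
      ∫ x, ((q i).2 x - (q j).2 x)^2 ∂lam ≤ (η n)^2/2 := by
    intro n i j hi hj
    rw [half _ _ (hq1 i) (hq1 j) (hq3 i) (hq3 j), half _ _ (hq2 i) (hq2 j) (hq4 i) (hq4 j)]
    have hmid : ((fun x => ((q i).1 x + (q j).1 x)/2, fun x => ((q i).2 x + (q j).2 x)/2) :
        (ℝ → ℝ) × (ℝ → ℝ)) ∈ K (min (N i) (N j)) := by
      refine ⟨((hq1 i).add (hq1 j)).div_const 2, ((hq2 i).add (hq2 j)).div_const 2, ?_, ?_, ?_, ?_⟩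
      · intro x; have := hq3 i x; have := hq3 j x; constructor <;> simp only <;> linarith
      · intro x; have := hq4 i x; have := hq4 j x; constructor <;> simp only <;> linarith
      · intro p hp
        have := hq5 i p (hmono (min_le_left _ _) hp)
        have := hq5 j p (hmono (min_le_right _ _) hp)
        simp only; linarith
      · simp only
        have ig1 : ∀ k, Integrable (q k).1 lam := fun k => integrable_of_bdd (hq1 k) 1 fun x => by
          rw [abs_of_nonneg (hq3 k x).1]; exact (hq3 k x).2
        have ig2 : ∀ k, Integrable (q k).2 lam := fun k => integrable_of_bdd (hq2 k) 1 fun x => by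
          rw [abs_of_nonneg (hq4 k x).1]; exact (hq4 k x).2
        rw [integral_div, integral_div, integral_add (ig1 i) (ig1 j), integral_add (ig2 i) (ig2 j)]
        linarith [hq6 i, hq6 j]
    have h1 := hd_le _ _ hmid
    have h2 : D - (η n)^2/16 ≤ d (min (N i) (N j)) := by
      have e1 : (η i)^2 ≤ (η n)^2 := pow_le_pow_left₀ (hη i).le (hηanti n i hi) 2
      have e2 : (η j)^2 ≤ (η n)^2 := pow_le_pow_left₀ (hη j).le (hηanti n j hj) 2
      rcases min_choice (N i) (N j) with h | h <;> rw [h]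
      · linarith [hdN i]
      · linarith [hdN j]
    have h3 : Q (q i) ≤ D + (η n)^2/16 := by
      have e1 : (η i)^2 ≤ (η n)^2 := pow_le_pow_left₀ (hη i).le (hηanti n i hi) 2
      linarith [hQq i]
    have h4 : Q (q j) ≤ D + (η n)^2/16 := by
      have e1 : (η j)^2 ≤ (η n)^2 := pow_le_pow_left₀ (hη j).le (hηanti n j hj) 2
      linarith [hQq j]
    simp only [Q] at h1 h3 h4
    linarith
  have tool : ∀ g : ℕ → ℝ → ℝ, (∀ k, Measurable (g k)) → (∀ k x, 0 ≤ g k x ∧ g k x ≤ 1) →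
      (∀ n i j, n ≤ i → n ≤ j → ∫ x, (g i x - g j x)^2 ∂lam ≤ (η n)^2/2) →
      ∃ h : ℝ → ℝ, Measurable h ∧ (∀ x, 0 ≤ h x) ∧
        (∀ x δ, 0 < δ → ∀ᶠ k in Filter.atTop, g k x < h x + δ) ∧
        Filter.Tendsto (fun k => ∫ x, g k x ∂lam) Filter.atTop (nhds (∫ x, h x ∂lam)) ∧
        Integrable h lam := by
    intro g hg hg01 hgc
    have hae : ∀ᵐ x ∂lam, ∃ l : ℝ, Filter.Tendsto (fun n => g n x) Filter.atTop (nhds l) := by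
      apply Lp.ae_tendsto_of_cauchy_eLpNorm (p := 1) (fun n => (hg n).aestronglyMeasurable) le_rfl
        (B := fun k => ENNReal.ofReal (η k))
      · rw [← ENNReal.ofReal_tsum_of_nonneg (fun k => (hη k).le) summable_geometric_two]
        exact ENNReal.ofReal_ne_top
      · intro n i j hi hj
        rw [eLpNorm_one_eq_lintegral_enorm]
        have hb1 : ∀ x, |g i x - g j x| ≤ 1 := fun x => by
          have := hg01 i x; have := hg01 j x; rw [abs_le]; constructor <;> linarith
        have hgi1 : Integrable (g i - g j) lam := integrable_of_bdd ((hg i).sub (hg j)) 1 hb1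
        rw [← ofReal_integral_norm_eq_lintegral_enorm hgi1]
        refine (ENNReal.ofReal_lt_ofReal_iff (hη n)).2 ?_
        have hgi2 : Integrable (fun x => (g i x - g j x)^2) lam :=
          integrable_of_bdd (((hg i).sub (hg j)).pow_const 2) 1 fun x => by
            rw [abs_of_nonneg (sq_nonneg _)]
            exact (sq_le_one_iff_abs_le_one _).2 (hb1 x)
        have hn := hη n
        calc ∫ x, ‖(g i - g j) x‖ ∂lam ≤ ∫ x, ((g i x - g j x)^2 / (2 * η n) + η n / 2) ∂lam := by
              apply integral_mono hgi1.norm ((hgi2.div_const _).add (integrable_const _))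
              intro x
              change |g i x - g j x| ≤ (g i x - g j x)^2 / (2 * η n) + η n / 2
              rw [← sq_abs (g i x - g j x), div_add_div _ _ (by positivity) (by positivity),
                le_div_iff₀ (by positivity)]
              nlinarith [sq_nonneg (|g i x - g j x| - η n)]
          _ = (∫ x, (g i x - g j x)^2 ∂lam) / (2 * η n) + η n / 2 := by
              rw [integral_add (hgi2.div_const _) (integrable_const _), integral_div]; simp
          _ ≤ ((η n)^2/2) / (2 * η n) + η n / 2 := by
              gcongr; exact hgc n i j hi hj
          _ < η n := by
              have : ((η n)^2/2) / (2 * η n) = η n / 4 := by field_simp; norm_num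
              rw [this]; linarith
    have hbA : ∀ x, Filter.IsBoundedUnder (· ≤ ·) Filter.atTop fun k => g k x := fun x =>
      ⟨1, Filter.eventually_map.2 (Filter.Eventually.of_forall fun k => (hg01 k x).2)⟩
    have hbB : ∀ x, Filter.IsBoundedUnder (· ≥ ·) Filter.atTop fun k => g k x := fun x =>
      ⟨0, Filter.eventually_map.2 (Filter.Eventually.of_forall fun k => (hg01 k x).1)⟩
    have hm : Measurable fun x => Filter.limsup (fun k => g k x) Filter.atTop := Measurable.limsup hg
    have h0 : ∀ x, 0 ≤ Filter.limsup (fun k => g k x) Filter.atTop := fun x =>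
      Filter.le_limsup_of_frequently_le
        (Filter.Eventually.of_forall fun k => (hg01 k x).1).frequently (hbA x)
    have h1 : ∀ x, Filter.limsup (fun k => g k x) Filter.atTop ≤ 1 := fun x =>
      Filter.limsup_le_of_le (hbB x).isCoboundedUnder_le
        (Filter.Eventually.of_forall fun k => (hg01 k x).2)
    refine ⟨fun x => Filter.limsup (fun k => g k x) Filter.atTop, hm, h0, ?_, ?_, ?_⟩
    · intro x δ hδ
      exact Filter.eventually_lt_of_limsup_lt (lt_add_of_pos_right _ hδ) (hbA x)
    · refine tendsto_integral_of_dominated_convergence (fun _ => (1:ℝ))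
        (fun k => (hg k).aestronglyMeasurable) (integrable_const _)
        (fun k => ae_of_all _ fun x => ?_) ?_
      · rw [Real.norm_eq_abs, abs_of_nonneg (hg01 k x).1]; exact (hg01 k x).2
      · filter_upwards [hae] with x hx
        obtain ⟨l, hl⟩ := hx
        rw [hl.limsup_eq]; exact hl
    · exact integrable_of_bdd hm 1 fun x => by rw [abs_of_nonneg (h0 x)]; exact h1 x
  obtain ⟨u, hum, hu0, hul, hut, hui⟩ := tool (fun k => (q k).1) hq1 hq3 (fun n i j hi hj => by
    have := cau n i j hi hj
    have : 0 ≤ ∫ x, ((q i).2 x - (q j).2 x)^2 ∂lam := integral_nonneg fun x => sq_nonneg _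
    linarith)
  obtain ⟨v, hvm, hv0, hvl, hvt, hvi⟩ := tool (fun k => (q k).2) hq2 hq4 (fun n i j hi hj => by
    have := cau n i j hi hj
    have : 0 ≤ ∫ x, ((q i).1 x - (q j).1 x)^2 ∂lam := integral_nonneg fun x => sq_nonneg _
    linarith)
  have hfin : ∫ x, u x ∂lam + ∫ x, v x ∂lam ≤ L :=
    le_of_tendsto (hut.add hvt) (Filter.Eventually.of_forall hq6)
  refine (threshold (iUnion_subset hsub) u v hum hvm hu0 hv0 ?_).trans ?_
  · intro p hp
    obtain ⟨n, hn⟩ := mem_iUnion.1 hp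
    refine le_of_forall_pos_le_add fun δ hδ => ?_
    obtain ⟨k, hk1, hk2, hk3⟩ := ((hul p.1 (δ/2) (half_pos hδ)).and
      ((hvl p.2 (δ/2) (half_pos hδ)).and (Filter.eventually_ge_atTop n))).exists
    have := hq5 k p (hmono (hk3.trans (hNk k)) hn)
    linarith
  · rw [← ofReal_integral_eq_lintegral_ofReal hui (ae_of_all _ hu0),
      ← ofReal_integral_eq_lintegral_ofReal hvi (ae_of_all _ hv0),
      ← ENNReal.ofReal_add (integral_nonneg hu0) (integral_nonneg hv0)]
    exact ENNReal.ofReal_le_ofReal hfin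

/-- countable intersections of finite unions of rectangles -/
def FRd (S : Set (ℝ × ℝ)) : Prop := ∃ H : ℕ → Set (ℝ × ℝ), (∀ n, FR (H n)) ∧ S = ⋂ n, H n

lemma FRd.union {S T : Set (ℝ × ℝ)} (hS : FRd S) (hT : FRd T) : FRd (S ∪ T) := by
  obtain ⟨H, hH, rfl⟩ := hS
  obtain ⟨G, hG, rfl⟩ := hT
  refine ⟨fun n => H n.unpair.1 ∪ G n.unpair.2, fun n => (hH _).union (hG _), ?_⟩
  ext p
  simp only [mem_union, mem_iInter]
  constructor
  · rintro (h | h) n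
    · exact Or.inl (h _)
    · exact Or.inr (h _)
  · intro h
    by_contra! hcon
    obtain ⟨⟨i, hi⟩, j, hj⟩ := hcon
    have := h (Nat.pair i j)
    simp only [Nat.unpair_pair] at this
    tauto

lemma FRd.beta_le {S : Set (ℝ × ℝ)} (hS : FRd S) : beta S ≤ alpha S := by
  obtain ⟨H, hH, rfl⟩ := hS
  rw [← iInter_dissipate]
  refine beta_le_alpha_iInter _ (fun n => ?_) antitone_dissipate
  induction n with
  | zero => rw [dissipate_zero_nat]; exact hH 0
  | succ n ih => rw [dissipate_succ]; exact ih.inter (hH _)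

lemma FRd.sub {S : Set (ℝ × ℝ)} (hS : FRd S) : S ⊆ Ioo (0:ℝ) 1 ×ˢ Ioo (0:ℝ) 1 := by
  obtain ⟨H, hH, rfl⟩ := hS
  exact (iInter_subset _ 0).trans (hH 0).sub

theorem stmt17 (W : Set (ℝ × ℝ)) (hW : MemADeltaSigma W) :
    alpha W = beta W := by
  refine le_antisymm (alpha_le_beta W) ?_
  obtain ⟨G, hG, rfl⟩ := hW
  rw [← iUnion_accumulate (s := fun i => ⋂ j, G i j)]
  set A : ℕ → Set (ℝ × ℝ) := accumulate (fun i => ⋂ j, G i j) with hA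
  have hA1 : ∀ n, FRd (A n) := by
    intro n
    induction n with
    | zero =>
      rw [hA, accumulate_zero_nat]
      exact ⟨G 0, fun j => FR_of (hG 0 j), rfl⟩
    | succ n ih =>
      rw [hA, accumulate_succ]
      exact ih.union ⟨G (n+1), fun j => FR_of (hG _ j), rfl⟩
  refine le_of_forall_gt_imp_ge_of_dense fun c hc => ?_
  rcases eq_or_ne c ∞ with rfl | hct
  · exact le_top
  rw [← ENNReal.ofReal_toReal hct]
  refine beta_iUnion_le A monotone_accumulate (fun n => (hA1 n).sub) _ fun n => ?_
  rw [ENNReal.ofReal_toReal hct]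
  exact ((hA1 n).beta_le.trans (alpha_mono (subset_iUnion A n))).trans_lt hc
end
end

section
/- Let μ and ν be probability measures on (0,1), both absolutely continuous with respect to Lebesgue measure, and let W ⊆ (0,1)×(0,1) be a set of class A_{δσ} such that W ∩ (A×B) ≠ ∅ whenever Leb(A) > 0 and Leb(B) > 0. Then sup{m(W) : m a coupling of μ and ν} = 1. -/
open MeasureTheory Set
open scoped ENNReal

noncomputable section

open scoped CompactlySupported


section core
variable {X : Type*} [TopologicalSpace X] [CompactSpace X] [T2Space X] [SecondCountableTopology X]
  [MeasurableSpace X] [BorelSpace X]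

/-- values of the dual problem -/
def dualSet (μ ν : Measure X) (K : Set (X × X)) (h : K → ℝ) : Set ℝ :=
  {a | ∃ f g : C(X, ℝ), (∀ x, 0 ≤ f x) ∧ (∀ x, 0 ≤ g x) ∧
    (∀ z : K, h z ≤ f z.1.1 + g z.1.2) ∧ a = ∫ x, f x ∂μ + ∫ x, g x ∂ν}

lemma cint (μ : Measure X) [IsFiniteMeasure μ] (f : C(X, ℝ)) : Integrable f μ := by
  have := f.continuous.integrable_of_hasCompactSupport (μ := μ) (HasCompactSupport.of_compactSpace _)
  exact this

lemma dualSet_nonneg {μ ν : Measure X} {K : Set (X × X)} {h : K → ℝ} {a : ℝ}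
    (ha : a ∈ dualSet μ ν K h) : 0 ≤ a := by
  obtain ⟨f, g, hf, hg, -, rfl⟩ := ha
  exact add_nonneg (integral_nonneg hf) (integral_nonneg hg)

lemma dualSet_bdd (μ ν : Measure X) (K : Set (X × X)) (h : K → ℝ) :
    BddBelow (dualSet μ ν K h) := ⟨0, fun _ ha => dualSet_nonneg ha⟩

lemma dualSet_smul {μ ν : Measure X} {K : Set (X × X)} {h : K → ℝ} {c : ℝ} (hc : 0 < c) {a : ℝ}
    (ha : a ∈ dualSet μ ν K h) : c * a ∈ dualSet μ ν K (c • h) := by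
  obtain ⟨f, g, hf, hg, hh, rfl⟩ := ha
  refine ⟨c • f, c • g, fun x => mul_nonneg hc.le (hf x), fun x => mul_nonneg hc.le (hg x),
    fun z => ?_, ?_⟩
  · have := mul_le_mul_of_nonneg_left (hh z) hc.le
    simpa [mul_add] using this
  · simp [integral_const_mul, mul_add]

lemma le_of_closed {μ ν : Measure X} [IsFiniteMeasure μ] [IsFiniteMeasure ν]
    (h : ∀ f : C(X, ℝ), (∀ x, 0 ≤ f x) → ∫ x, f x ∂μ ≤ ∫ x, f x ∂ν) : μ ≤ ν := by
  let _ := TopologicalSpace.metrizableSpaceMetric X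
  have h1 : ∀ F : Set X, IsClosed F → μ F ≤ ν F := by
    intro F hF
    have h2 : ∀ n, μ F ≤ ∫⁻ x, (hF.apprSeq n x : ℝ≥0∞) ∂ν := by
      intro n
      refine (HasOuterApproxClosed.measure_le_lintegral hF μ n).trans ?_
      let f : C(X, ℝ) := ⟨fun x => (hF.apprSeq n x : ℝ), by fun_prop⟩
      have h3 := h f (fun x => NNReal.coe_nonneg _)
      have h4 : ∀ τ : Measure X, IsFiniteMeasure τ →
          ∫⁻ x, (hF.apprSeq n x : ℝ≥0∞) ∂τ = ENNReal.ofReal (∫ x, f x ∂τ) := by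
        intro τ _
        rw [ofReal_integral_eq_lintegral_ofReal (cint τ f)
          (Filter.Eventually.of_forall fun x => NNReal.coe_nonneg _)]
        simp [f]
      rw [h4 μ inferInstance, h4 ν inferInstance]
      exact ENNReal.ofReal_le_ofReal h3
    exact ge_of_tendsto' (HasOuterApproxClosed.tendsto_lintegral_apprSeq hF ν) h2
  refine Measure.le_iff.2 fun s hs => ?_
  rw [hs.measure_eq_iSup_isClosed_of_ne_top (measure_ne_top _ _)]
  exact iSup₂_le fun F hFs => iSup_le fun hF => (h1 F hF).trans (measure_mono hFs)

lemma exists_primal (μ ν : Measure X) [IsFiniteMeasure μ] [IsFiniteMeasure ν]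
    (K : Set (X × X)) (hK : IsClosed K) (hp : 0 < sInf (dualSet μ ν K 1)) :
    ∃ m : Measure (X × X), m ≠ 0 ∧ m Kᶜ = 0 ∧ m.map Prod.fst ≤ μ ∧ m.map Prod.snd ≤ ν := by
  have : CompactSpace K := isCompact_iff_compactSpace.1 hK.isCompact
  let N : C_c(K, ℝ) → ℝ := fun h => sInf (dualSet μ ν K h)
  have hne : ∀ h : C_c(K, ℝ), (dualSet μ ν K h).Nonempty := by
    intro h
    obtain ⟨C, hC⟩ := (isCompact_range h.continuous).bddAbove
    refine ⟨_, ContinuousMap.const X (max C 0), 0, fun x => le_max_right _ _, fun x => le_rfl, fun z => ?_, rfl⟩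
    have := hC (mem_range_self z)
    simpa using Or.inl this
  have Nle : ∀ h a, a ∈ dualSet μ ν K h → sInf (dualSet μ ν K h) ≤ a := fun h a ha => csInf_le (dualSet_bdd μ ν K h) ha
  have Nnn : ∀ h, 0 ≤ N h := fun h => le_csInf (hne h) fun a ha => dualSet_nonneg ha
  have N1 : ∀ (c : ℝ), 0 < c → ∀ h, N (c • h) ≤ c * N h := by
    intro c hc h
    rw [← div_le_iff₀' hc]
    refine le_csInf (hne h) fun a ha => ?_
    rw [div_le_iff₀' hc]
    exact Nle _ _ (dualSet_smul hc ha)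
  have N_hom : ∀ c : ℝ, 0 < c → ∀ x, N (c • x) = c * N x := by
    intro c hc x
    refine le_antisymm (N1 c hc x) ?_
    have := N1 c⁻¹ (inv_pos.2 hc) (c • x)
    rw [inv_smul_smul₀ hc.ne'] at this
    rwa [← div_eq_inv_mul, le_div_iff₀' hc] at this
  have N_add : ∀ x y, N (x + y) ≤ N x + N y := by
    intro x y
    have : N (x + y) - N y ≤ N x := by
      refine le_csInf (hne x) fun a ha => ?_
      rw [sub_le_comm]
      refine le_csInf (hne y) fun b hb => ?_
      rw [sub_le_iff_le_add']
      refine Nle _ _ ?_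
      obtain ⟨f, g, hf, hg, hh, rfl⟩ := ha
      obtain ⟨f', g', hf', hg', hh', rfl⟩ := hb
      refine ⟨f + f', g + g', fun x => add_nonneg (hf x) (hf' x), fun x => add_nonneg (hg x) (hg' x), fun z => ?_, ?_⟩
      · have := hh z
        have := hh' z
        simp
        linarith
      · simp only [ContinuousMap.add_apply]
        rw [integral_add (cint μ f) (cint μ f'), integral_add (cint ν g) (cint ν g')]
        ring
    linarith
  let one : C_c(K, ℝ) := ⟨1, HasCompactSupport.of_compactSpace _⟩
  have hone : (one : K → ℝ) = 1 := rfl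
  have hN1 : 0 < N one := hp
  have hone0 : one ≠ 0 := by
    intro h0
    have : N one ≤ 0 := by
      rw [h0]
      refine Nle _ _ ⟨0, 0, ?_⟩
      simp
    linarith
  let F : C_c(K, ℝ) →ₗ.[ℝ] ℝ := LinearPMap.mkSpanSingleton one (N one) hone0
  obtain ⟨L, hL1, hL2⟩ := exists_extension_of_le_sublinear F N N_hom N_add (by
    rintro ⟨x, hx⟩
    obtain ⟨c, rfl⟩ := Submodule.mem_span_singleton.1 hx
    have : F ⟨c • one, hx⟩ = c * N one := LinearPMap.mkSpanSingleton'_apply _ _ _ _ _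
    rw [this]
    rcases le_or_gt c 0 with hc | hc
    · exact (mul_nonpos_of_nonpos_of_nonneg hc hN1.le).trans (Nnn _)
    · exact (N_hom c hc one).ge)
  have hL1' : L one = N one := by
    have h1 : one ∈ F.domain := Submodule.mem_span_singleton_self one
    rw [hL1 ⟨one, h1⟩]
    exact LinearPMap.mkSpanSingleton_apply _ _ hone0 _
  have hLpos : ∀ h, 0 ≤ h → 0 ≤ L h := by
    intro h hh
    have h1 : L (-h) ≤ 0 := (hL2 _).trans (Nle _ _ ⟨0, 0, by simp, by simp, fun z => by simpa using hh z, by simp⟩)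
    simpa using h1
  let Λ : C_c(K, ℝ) →ₚ[ℝ] ℝ := PositiveLinearMap.mk₀ L hLpos
  let m0 : Measure K := RealRMK.rieszMeasure Λ
  have hm0 : ∀ h : C_c(K, ℝ), ∫ x, h x ∂m0 = L h := fun h => RealRMK.integral_rieszMeasure Λ h
  have : IsFiniteMeasure m0 := by
    have : m0.Regular := RealRMK.regular_rieszMeasure Λ
    infer_instance
  have hv : Measurable (Subtype.val : K → X × X) := measurable_subtype_coe
  have hmarg : ∀ (q : X × X → X) (hq : Continuous q) (τ : Measure X) [IsFiniteMeasure τ],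
      (∀ f : C(X, ℝ), (∀ x, 0 ≤ f x) → ∫ x, f x ∂τ ∈ dualSet μ ν K (fun z => f (q z))) →
      (m0.map Subtype.val).map q ≤ τ := by
    intro q hq τ _ hτ
    refine le_of_closed fun f hf => ?_
    rw [Measure.map_map hq.measurable hv, integral_map (hq.measurable.comp hv).aemeasurable
      f.continuous.aestronglyMeasurable]
    let h : C_c(K, ℝ) := ⟨⟨fun z => f (q z), by fun_prop⟩, HasCompactSupport.of_compactSpace _⟩
    calc _ = L h := hm0 h
      _ ≤ _ := (hL2 h).trans (Nle _ _ (hτ f hf))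
  refine ⟨m0.map Subtype.val, ?_, ?_, hmarg _ continuous_fst _ ?_, hmarg _ continuous_snd _ ?_⟩
  · intro h0
    rw [Measure.map_eq_zero_iff hv.aemeasurable] at h0
    have := hm0 one
    rw [hL1', h0, integral_zero_measure] at this
    linarith
  · rw [Measure.map_apply hv hK.measurableSet.compl]
    simp
  · intro f hf
    exact ⟨f, 0, hf, fun _ => le_rfl, fun z => by simp, by simp⟩
  · intro f hf
    exact ⟨0, f, fun _ => le_rfl, hf, fun z => by simp, by simp⟩

lemma core (μ ν : Measure X) [IsFiniteMeasure μ] [IsFiniteMeasure ν]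
    (K : Set (X × X)) (hK : IsClosed K)
    (h : ∀ m : Measure (X × X), m Kᶜ = 0 → m.map Prod.fst ≤ μ → m.map Prod.snd ≤ ν → m = 0) :
    ∃ A B : Set X, MeasurableSet A ∧ MeasurableSet B ∧ μ A = 0 ∧ ν B = 0 ∧
      ∀ z ∈ K, z.1 ∈ A ∨ z.2 ∈ B := by
  have hp : sInf (dualSet μ ν K 1) ≤ 0 := by
    by_contra! hp
    obtain ⟨m, h0, h1, h2, h3⟩ := exists_primal μ ν K hK hp
    exact h0 (h m h1 h2 h3)
  have hne : (dualSet μ ν K 1).Nonempty :=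
    ⟨_, 1, 0, fun x => zero_le_one, fun x => le_rfl, fun z => by simp, rfl⟩
  have key : ∀ n : ℕ, ∃ f g : C(X, ℝ), (∀ x, 0 ≤ f x) ∧ (∀ x, 0 ≤ g x) ∧
    (∀ z : K, 1 ≤ f z.1.1 + g z.1.2) ∧ ∫ x, f x ∂μ + ∫ x, g x ∂ν < (1/2)^n := by
    intro n
    obtain ⟨a, ⟨f, g, hf, hg, hh, rfl⟩, ha⟩ := exists_lt_of_csInf_lt hne (hp.trans_lt (by positivity : (0:ℝ) < (1/2)^n))
    exact ⟨f, g, hf, hg, hh, ha⟩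
  choose f g hf hg hfg hint using key
  have bc : ∀ (τ : Measure X) [IsFiniteMeasure τ] (f : ℕ → C(X, ℝ)), (∀ n x, 0 ≤ f n x) →
      (∀ n, ∫ x, f n x ∂τ ≤ (1/2)^n) →
      τ (Filter.limsup (fun n => {x | 1/2 ≤ f n x}) Filter.atTop) = 0 := by
    intro τ _ f hf hi
    refine measure_limsup_atTop_eq_zero ?_
    have hb : ∀ n, τ {x | 1/2 ≤ f n x} ≤ ENNReal.ofReal (2 * (1/2)^n) := by
      intro n
      have := mul_meas_ge_le_integral_of_nonneg (μ := τ) (Filter.Eventually.of_forall (hf n)) (cint τ (f n)) (1/2)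
      rw [← ofReal_measureReal]
      refine ENNReal.ofReal_le_ofReal ?_
      linarith [hi n]
    refine ne_top_of_le_ne_top ?_ (ENNReal.tsum_le_tsum hb)
    exact (summable_geometric_two.mul_left 2).tsum_ofReal_ne_top
  have hms : ∀ f : ℕ → C(X, ℝ), MeasurableSet (Filter.limsup (fun n => {x | 1/2 ≤ f n x}) Filter.atTop) := by
    intro f
    refine MeasurableSet.measurableSet_limsup fun n => ?_
    exact measurableSet_le measurable_const (f n).continuous.measurable
  refine ⟨_, _, hms f, hms g, bc μ f hf fun n => ?_, bc ν g hg fun n => ?_, fun z hz => ?_⟩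
  · linarith [hint n, integral_nonneg (μ := ν) (f := g n) (hg n)]
  · linarith [hint n, integral_nonneg (μ := μ) (f := f n) (hf n)]
  · rw [Filter.mem_limsup_iff_frequently_mem, Filter.mem_limsup_iff_frequently_mem,
      ← Filter.frequently_or_distrib]
    refine Filter.Frequently.of_forall fun n => ?_
    have := hfg n ⟨z, hz⟩
    simp only [mem_ofPred_eq]
    by_contra! hcon
    simp only at this
    linarith [hcon.1, hcon.2]
end core

lemma delta (μ ν : Measure ℝ) [IsFiniteMeasure μ] [IsFiniteMeasure ν]
    (G : ℕ → Set (ℝ × ℝ)) (hG : ∀ j, IsFinUnionRect (G j))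
    (h : ∀ m : Measure (ℝ × ℝ), m (⋂ j, G j)ᶜ = 0 → m.map Prod.fst ≤ μ →
      m.map Prod.snd ≤ ν → m = 0) :
    ∃ A B : Set ℝ, MeasurableSet A ∧ MeasurableSet B ∧ μ A = 0 ∧ ν B = 0 ∧
      ∀ z ∈ ⋂ j, G j, z.1 ∈ A ∨ z.2 ∈ B := by
  classical
  choose n R hR hGR using hG
  choose U V hU hV _ _ hUV using hR
  let ι := ℚ ⊕ ((Σ j, Fin (n j)) ⊕ (Σ j, Fin (n j)))
  let S : ι → Set ℝ := Sum.elim (fun q => Iio (q : ℝ))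
    (Sum.elim (fun p => U p.1 p.2) (fun p => V p.1 p.2))
  have hS : ∀ i, MeasurableSet (S i) := by
    rintro (q | p | p)
    · exact measurableSet_Iio
    · exact hU _ _
    · exact hV _ _
  let φ : ℝ → (ι → Bool) := fun x i => decide (x ∈ S i)
  have hφS : ∀ x i, φ x i = true ↔ x ∈ S i := fun x i => by simp [φ]
  have hφm : Measurable φ := by
    refine measurable_pi_iff.2 fun i => measurable_to_bool ?_
    convert hS i using 1
    ext x
    simp [φ]
  have hφi : Function.Injective φ := by
    have aux : ∀ x y, x < y → φ x ≠ φ y := by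
      intro x y hxy he
      obtain ⟨q, h1, h2⟩ := exists_rat_btwn hxy
      have h3 : φ x (Sum.inl q) = true := (hφS _ _).2 h1
      rw [he, hφS] at h3
      exact absurd h2 (not_lt.2 (le_of_lt h3))
    intro x y he
    rcases lt_trichotomy x y with h1 | h1 | h1
    · exact absurd he (aux _ _ h1)
    · exact h1
    · exact absurd he.symm (aux _ _ h1)
  have hφ : MeasurableEmbedding φ := hφm.measurableEmbedding hφi
  let K : Set ((ι → Bool) × (ι → Bool)) :=
    ⋂ j, ⋃ k : Fin (n j), {z | z.1 (Sum.inr (Sum.inl ⟨j, k⟩)) = true ∧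
      z.2 (Sum.inr (Sum.inr ⟨j, k⟩)) = true}
  have hK : IsClosed K := by
    refine isClosed_iInter fun j => isClosed_iUnion_of_finite fun k => ?_
    exact (isClosed_eq (by fun_prop) continuous_const).inter
      (isClosed_eq (by fun_prop) continuous_const)
  have hΦ : MeasurableEmbedding (Prod.map φ φ) := hφ.prodMap hφ
  have hpre : Prod.map φ φ ⁻¹' K = ⋂ j, G j := by
    ext z
    simp only [K, mem_preimage, mem_iInter, mem_iUnion, mem_ofPred_eq, Prod.map_fst, Prod.map_snd,
      hφS, hGR, hUV, mem_prod]
    rfl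
  obtain ⟨A, B, hA, hB, hA0, hB0, hAB⟩ := core (μ.map φ) (ν.map φ) K hK (by
    intro m hm1 hm2 hm3
    have hr : m (range (Prod.map φ φ))ᶜ = 0 := by
      have h1 : m (Prod.fst ⁻¹' (range φ)ᶜ) = 0 := by
        rw [← Measure.map_apply measurable_fst hφ.measurableSet_range.compl]
        refine le_antisymm ((hm2 _).trans ?_) zero_le
        rw [Measure.map_apply hφm hφ.measurableSet_range.compl]
        simp
      have h2 : m (Prod.snd ⁻¹' (range φ)ᶜ) = 0 := by
        rw [← Measure.map_apply measurable_snd hφ.measurableSet_range.compl]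
        refine le_antisymm ((hm3 _).trans ?_) zero_le
        rw [Measure.map_apply hφm hφ.measurableSet_range.compl]
        simp
      refine measure_mono_null ?_ (measure_union_null h1 h2)
      rw [range_prodMap]
      rintro ⟨x, y⟩ hxy
      simp only [mem_compl_iff, mem_prod, not_and_or] at hxy
      exact hxy
    have hback : (m.comap (Prod.map φ φ)).map (Prod.map φ φ) = m := by
      rw [hΦ.map_comap]
      exact Measure.restrict_eq_self_of_ae_mem (by rwa [ae_iff])
    have hmarg : ∀ (q : ∀ {α : Type}, α × α → α)
        (_ : ∀ z : ℝ × ℝ, q (Prod.map φ φ z) = φ (q z)) 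
        (_ : Measurable (q : ℝ × ℝ → ℝ)) (_ : Measurable (q : (ι → Bool) × (ι → Bool) → _))
        (τ : Measure ℝ), m.map q ≤ τ.map φ → (m.comap (Prod.map φ φ)).map q ≤ τ := by
      intro q hq hq1 hq2 τ hτ
      refine Measure.le_iff.2 fun s hs => ?_
      have := hτ (φ '' s)
      rw [← hback, Measure.map_map hq2 hΦ.measurable,
        Measure.map_apply (hq2.comp hΦ.measurable) (hφ.measurableSet_image.2 hs),
        Measure.map_apply hφm (hφ.measurableSet_image.2 hs), preimage_image_eq _ hφi] at this
      rw [Measure.map_apply hq1 hs]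
      refine le_trans (measure_mono ?_) this
      intro z hz
      exact ⟨q z, hz, (hq z).symm⟩
    have := h (m.comap (Prod.map φ φ)) (by
      rw [hΦ.comap_apply]
      refine measure_mono_null ?_ hm1
      rintro _ ⟨z, hz, rfl⟩ hzK
      exact hz (hpre ▸ hzK)) (hmarg Prod.fst (fun z => rfl) measurable_fst measurable_fst μ hm2)
      (hmarg Prod.snd (fun z => rfl) measurable_snd measurable_snd ν hm3)
    rw [← hback, this, Measure.map_zero])
  refine ⟨φ ⁻¹' A, φ ⁻¹' B, hφm hA, hφm hB, ?_, ?_, ?_⟩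
  · rwa [Measure.map_apply hφm hA] at hA0
  · rwa [Measure.map_apply hφm hB] at hB0
  · intro z hz
    rw [← hpre] at hz
    exact hAB _ hz

lemma IsFinUnionRect.meas {S : Set (ℝ × ℝ)} (h : IsFinUnionRect S) : MeasurableSet S := by
  obtain ⟨n, R, hR, rfl⟩ := h
  refine MeasurableSet.iUnion fun k => ?_
  obtain ⟨U, V, hU, hV, -, -, h⟩ := hR k
  exact h ▸ hU.prod hV

lemma MemADeltaSigma.meas {W : Set (ℝ × ℝ)} (h : MemADeltaSigma W) : MeasurableSet W := by
  obtain ⟨G, hG, rfl⟩ := h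
  exact MeasurableSet.iUnion fun i => MeasurableSet.iInter fun j => (hG i j).meas

lemma exists_partial (μ ν : Measure ℝ) [IsFiniteMeasure μ] [IsFiniteMeasure ν]
    (hμ : μ ≪ volume.restrict (Ioo (0:ℝ) 1))
    (hν : ν ≪ volume.restrict (Ioo (0:ℝ) 1)) (hμ0 : μ ≠ 0) (hν0 : ν ≠ 0)
    (W : Set (ℝ × ℝ)) (hW : MemADeltaSigma W)
    (hmeet : ∀ A B : Set ℝ, MeasurableSet A → MeasurableSet B →
      A ⊆ Ioo (0:ℝ) 1 → B ⊆ Ioo (0:ℝ) 1 →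
      0 < volume A → 0 < volume B → (W ∩ A ×ˢ B).Nonempty) :
    ∃ m : Measure (ℝ × ℝ), m Wᶜ = 0 ∧ m.map Prod.fst ≤ μ ∧ m.map Prod.snd ≤ ν ∧ m ≠ 0 := by
  by_contra! hcon
  obtain ⟨G, hG, rfl⟩ := hW
  have := fun i => delta μ ν (G i) (hG i) (fun m h1 h2 h3 => hcon m
    (measure_mono_null (compl_subset_compl.2 (subset_iUnion (fun i => ⋂ j, G i j) i)) h1) h2 h3)
  choose A B hA hB hA0 hB0 hAB using this
  have pos : ∀ (τ : Measure ℝ) (A : ℕ → Set ℝ), τ ≪ volume.restrict (Ioo (0:ℝ) 1) → τ ≠ 0 →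
      (∀ i, MeasurableSet (A i)) → (∀ i, τ (A i) = 0) → 0 < volume (Ioo (0:ℝ) 1 \ ⋃ i, A i) := by
    intro τ A hτ hτ0 hA hA0
    rw [pos_iff_ne_zero]
    intro h0
    apply hτ0
    rw [← Measure.measure_univ_eq_zero]
    have h1 : τ (⋃ i, A i)ᶜ = 0 := by
      apply hτ
      rw [Measure.restrict_apply (MeasurableSet.iUnion hA).compl, inter_comm]
      exact h0
    rw [← union_compl_self (⋃ i, A i)]
    exact measure_union_null (measure_iUnion_null hA0) h1
  obtain ⟨z, hz, hz1, hz2⟩ := hmeet _ _ (measurableSet_Ioo.diff (MeasurableSet.iUnion hA))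
    (measurableSet_Ioo.diff (MeasurableSet.iUnion hB)) sdiff_subset sdiff_subset
    (pos μ A hμ hμ0 hA hA0) (pos ν B hν hν0 hB hB0)
  obtain ⟨i, hi⟩ := mem_iUnion.1 hz
  rcases hAB i z hi with h | h
  · exact hz1.2 (mem_iUnion.2 ⟨i, h⟩)
  · exact hz2.2 (mem_iUnion.2 ⟨i, h⟩)

/-- partial couplings concentrated on W -/
def PC (μ ν : Measure ℝ) (W : Set (ℝ × ℝ)) : Set (Measure (ℝ × ℝ)) :=
  {m | m Wᶜ = 0 ∧ m.map Prod.fst ≤ μ ∧ m.map Prod.snd ≤ ν}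

lemma PC.univ_le {μ ν : Measure ℝ} [IsProbabilityMeasure μ] {W : Set (ℝ × ℝ)}
    {m : Measure (ℝ × ℝ)} (hm : m ∈ PC μ ν W) : m univ ≤ 1 := by
  have := hm.2.1 univ
  rwa [Measure.map_apply measurable_fst MeasurableSet.univ, preimage_univ, measure_univ (μ := μ)] at this

lemma step (μ ν : Measure ℝ) [IsProbabilityMeasure μ] (W : Set (ℝ × ℝ))
    (m : PC μ ν W) : ∃ r : Measure (ℝ × ℝ), m.1 + r ∈ PC μ ν W ∧
      ∀ r', m.1 + r' ∈ PC μ ν W → r' univ ≤ 2 * r univ := by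
  let s : ℝ≥0∞ := ⨆ (r : Measure (ℝ × ℝ)) (_ : m.1 + r ∈ PC μ ν W), r univ
  have hs : ∀ r', m.1 + r' ∈ PC μ ν W → r' univ ≤ s := fun r' h =>
    le_iSup₂_of_le (f := fun (r : Measure (ℝ × ℝ)) (_ : m.1 + r ∈ PC μ ν W) => r univ) r' h le_rfl
  have hs1 : s ≤ 1 := iSup₂_le fun r hr => by
    refine le_trans ?_ (PC.univ_le hr)
    simp
  by_cases h0 : s = 0
  · refine ⟨0, by simp, fun r' h => ?_⟩
    simpa [h0] using hs r' h
  · have h2 : s / 2 < s := ENNReal.half_lt_self h0 (ne_top_of_le_ne_top ENNReal.one_ne_top hs1)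
    obtain ⟨r, hr⟩ := lt_iSup_iff.1 h2
    obtain ⟨hr, h3⟩ := lt_iSup_iff.1 hr
    refine ⟨r, hr, fun r' h => (hs r' h).trans ?_⟩
    rw [mul_comm]
    exact (ENNReal.div_le_iff (by simp) (by simp)).1 h3.le

lemma exists_max (μ ν : Measure ℝ) [IsProbabilityMeasure μ] (W : Set (ℝ × ℝ)) :
    ∃ m ∈ PC μ ν W, ∀ r, m + r ∈ PC μ ν W → r = 0 := by
  choose r hr hmax using step μ ν W
  let M : ℕ → PC μ ν W := fun n => Nat.rec ⟨0, by simp [PC, Measure.zero_le]⟩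
    (fun _ m => ⟨m.1 + r m, hr m⟩) n
  have hM0 : (M 0).1 = 0 := rfl
  have hMs : ∀ n, (M (n+1)).1 = (M n).1 + r (M n) := fun n => rfl
  have hMsum : ∀ n, ∀ s, (M n).1 s = ∑ k ∈ Finset.range n, r (M k) s := by
    intro n s
    induction n with
    | zero => simp [hM0]
    | succ n ih => rw [hMs, Finset.sum_range_succ, Measure.add_apply, ih]
  let m := Measure.sum fun k => r (M k)
  have hms : ∀ s, MeasurableSet s → m s = ⨆ n, (M n).1 s := by
    intro s hs
    simp only [m, Measure.sum_apply _ hs, hMsum, ENNReal.tsum_eq_iSup_nat]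
  have hlim : ∀ (q : ℝ × ℝ → ℝ) (hq : Measurable q) (r' : Measure (ℝ × ℝ)) (τ : Measure ℝ),
      (∀ n, ((M n).1 + r').map q ≤ τ) → (m + r').map q ≤ τ := by
    intro q hq r' τ h
    refine Measure.le_iff.2 fun s hs => ?_
    rw [Measure.map_apply hq hs, Measure.add_apply, hms _ (hq hs), ENNReal.iSup_add]
    refine iSup_le fun n => ?_
    have := h n s
    rwa [Measure.map_apply hq hs, Measure.add_apply] at this
  have hle : ∀ n, (M n).1 ≤ m := fun n => Measure.le_iff.2 fun s hs => by
    rw [hms s hs]; exact le_iSup (fun n => (M n).1 s) n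
  have hmPC : m ∈ PC μ ν W := by
    refine ⟨?_, ?_, ?_⟩
    · rw [Measure.sum_apply_eq_zero]
      intro k
      have := (hr (M k)).1
      rw [Measure.add_apply, add_eq_zero] at this
      exact this.2
    · have := hlim Prod.fst measurable_fst 0 μ (fun n => by simpa using (M n).2.2.1)
      simpa using this
    · have := hlim Prod.snd measurable_snd 0 ν (fun n => by simpa using (M n).2.2.2)
      simpa using this
  refine ⟨m, hmPC, fun r' hr' => ?_⟩
  have h1 : ∀ n, (M n).1 + r' ∈ PC μ ν W := by
    intro n
    have hl : (M n).1 + r' ≤ m + r' := add_le_add_left (hle n) r'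
    exact ⟨le_antisymm ((hl _).trans hr'.1.le) zero_le,
      (Measure.map_mono hl measurable_fst).trans hr'.2.1,
      (Measure.map_mono hl measurable_snd).trans hr'.2.2⟩
  have h2 : ∀ n, r' univ ≤ 2 * r (M n) univ := fun n => hmax (M n) r' (h1 n)
  have h3 : ∑' n, r (M n) univ ≠ ⊤ := by
    rw [← Measure.sum_apply _ MeasurableSet.univ]
    exact ne_top_of_le_ne_top ENNReal.one_ne_top (PC.univ_le hmPC)
  have h4 := ENNReal.Tendsto.const_mul (a := 2) (ENNReal.tendsto_atTop_zero_of_tsum_ne_top h3)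
    (Or.inr (by simp))
  rw [mul_zero] at h4
  have h5 : r' univ ≤ 0 := ge_of_tendsto' h4 h2
  exact Measure.measure_univ_eq_zero.1 (le_antisymm h5 zero_le)

theorem stmt19 (μ ν : Measure ℝ) [IsProbabilityMeasure μ] [IsProbabilityMeasure ν]
    (hμ : μ ≪ volume.restrict (Ioo (0:ℝ) 1))
    (hν : ν ≪ volume.restrict (Ioo (0:ℝ) 1))
    (W : Set (ℝ × ℝ)) (hW : MemADeltaSigma W)
    (hmeet : ∀ A B : Set ℝ, MeasurableSet A → MeasurableSet B →
      A ⊆ Ioo (0:ℝ) 1 → B ⊆ Ioo (0:ℝ) 1 →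
      0 < volume A → 0 < volume B → (W ∩ A ×ˢ B).Nonempty) :
    (⨆ (m : Measure (ℝ × ℝ)) (_ : m.map Prod.fst = μ ∧ m.map Prod.snd = ν),
      m W) = 1 := by

  have hWm := hW.meas
  refine le_antisymm (iSup₂_le fun m hm => ?_) ?_
  · refine (measure_mono (subset_univ W)).trans ?_
    have := congrArg (fun τ : Measure ℝ => τ univ) hm.1
    simp only [Measure.map_apply measurable_fst MeasurableSet.univ, preimage_univ,
      measure_univ] at this
    exact this.le
  · obtain ⟨m, hm, hmax⟩ := exists_max μ ν W
    have hfu : m.map Prod.fst univ = m univ := by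
      rw [Measure.map_apply measurable_fst MeasurableSet.univ, preimage_univ]
    have hsu : m.map Prod.snd univ = m univ := by
      rw [Measure.map_apply measurable_snd MeasurableSet.univ, preimage_univ]
    have : IsFiniteMeasure m := ⟨(PC.univ_le hm).trans_lt ENNReal.one_lt_top⟩
    have hu : m univ = 1 := by
      by_contra hne
      have hlt : m univ < 1 := lt_of_le_of_ne (PC.univ_le hm) hne
      have nz : ∀ (τ : Measure ℝ) [IsProbabilityMeasure τ] (σ : Measure ℝ) [IsFiniteMeasure σ],
          σ ≤ τ → σ univ = m univ → τ - σ ≠ 0 := by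
        intro τ _ σ _ hle hσ h0
        have h1 := Measure.sub_apply MeasurableSet.univ hle
        rw [h0, hσ, measure_univ (μ := τ)] at h1
        have h2 : (1 : ℝ≥0∞) - m univ = 0 := h1.symm
        exact absurd (tsub_eq_zero_iff_le.1 h2) (not_le.2 hlt)
      obtain ⟨r, hr1, hr2, hr3, hr0⟩ := exists_partial (μ - m.map Prod.fst) (ν - m.map Prod.snd)
        ((Measure.absolutelyContinuous_of_le Measure.sub_le).trans hμ)
        ((Measure.absolutelyContinuous_of_le Measure.sub_le).trans hν)
        (nz μ _ hm.2.1 hfu) (nz ν _ hm.2.2 hsu) W hW hmeet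
      refine hr0 (hmax r ⟨?_, ?_, ?_⟩)
      · rw [Measure.add_apply, hm.1, hr1, add_zero]
      · rw [Measure.map_add _ _ measurable_fst, add_comm]
        exact (add_le_add_left hr2 _).trans (Measure.sub_add_cancel_of_le hm.2.1).le
      · rw [Measure.map_add _ _ measurable_snd, add_comm]
        exact (add_le_add_left hr3 _).trans (Measure.sub_add_cancel_of_le hm.2.2).le
    have e1 : m.map Prod.fst = μ :=
      Measure.eq_of_le_of_measure_univ_eq hm.2.1 (by rw [hfu, hu, measure_univ])
    have e2 : m.map Prod.snd = ν :=
      Measure.eq_of_le_of_measure_univ_eq hm.2.2 (by rw [hsu, hu, measure_univ])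
    refine le_iSup₂_of_le m ⟨e1, e2⟩ ?_
    have h1 := measure_add_measure_compl (μ := m) hWm
    rw [hm.1, add_zero, hu] at h1
    exact h1.ge
end
end
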